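/- arXiv:2510.23199 — 12 statements merged into one kernel-verified Lean document; each statement's English description precedes it below -/
import Mathlib

section
/- (Theorem 3, Trackability; deterministic form.) Let K ≥ 2, C_suf ∈ (0,1), w_min ∈ (0,1], and B ∈ ℕ with B ≥ 2/w_min. Let w : ℝ^K → Δ_K satisfy w_i(Q) ≥ w_min for all i ∈ {1,…,K} and all Q ∈ ℝ^K. Let P ∈ ℝ^K have a unique maximizer i*(P). Let (w_{b,i})_{b∈[B], i∈[K]} be nonnegative reals with Σ_{i=1}^K w_{b,i} = 1 for every b and w_{1,i} > 0 for every i, let (Q_{b,i})_{b∈[B], i∈[K]} be reals, and for each b define the running weighted means Q̄_{b,i} = (Σ_{b'=1}^{b} w_{b',i} Q_{b',i}) / (Σ_{b'=1}^{b} w_{b',i}). Assume: (a) for every b ∈ {2,…,B} and every index i satisfying (1/(b−1)) Σ_{b'=1}^{b−1} w_{b',i} ≤ w_i(Q̄_{b−1})/C_suf, one has w_{b,i} ≥ w_i(Q̄_{b−1})/4; and (b) for every b ∈ [B], i*(P) is not a maximizer of the vector Q̄_b. Then there exists a constant C_track > 0 depending only on C_suf (in particular independent of K, B, w_min, P, w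 and the sequences) such that (1/B) Σ_{b=1}^{B} Σ_{i=1}^{K} w_{b,i} (Q_{b,i} − P_i)²/2 ≥ C_track · inf { Σ_{i=1}^{K} w_i(Q)(Q_i − P_i)²/2 : Q ∈ ℝ^K such that i*(P) is not a maximizer of Q }. -/
/-!
Fix an arm `i`, and write `S b` for its cumulative weight, `e b = Qbar b i - P i` for the error of
its running mean, and `H` for its total cost `∑ w_b (Q_b - P)²`. As `Qbar b` never has `i*` as a
maximizer, the infimum `V` is at most `½ ∑ i, w_i(Qbar b) (e b)²` for every `b`. Summing this over
the last half of the rounds, it suffices to bound, arm by arm, `∑ b, w_i(Qbar b) (e b)²` by a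
constant multiple of `H`.

In a round where the arm is sufficiently sampled, `w_i(Qbar b) ≤ S b / b`, and
`S b * (e b)² ≤ H` by convexity, so these rounds contribute at most `H ∑ 1 / b`. In the other
rounds the tracking condition gives `w_i(Qbar b) ≤ 4 w_{b+1}`, and a weighted Hardy inequality
(`hardy_shifted`) bounds `∑ w_{b+1} (e b)²` by a multiple of `H`. Because the average `e b` stops
one round before the weight `w_{b+1}`, Hardy's inequality needs `w_{b+1} ≤ κ S b`; this holds in
the last half of the rounds, since tracking forces `S b ≥ wmin (b - 1) / 4` and `B ≥ 2 / wmin`.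
The resulting constant is absolute.
-/

open Finset

/-- Index `i` is a maximizer of the vector `Q`. -/
def isMax {K : ℕ} (Q : Fin K → ℝ) (i : Fin K) : Prop := ∀ j, Q j ≤ Q i

/-- Index `i` is the unique maximizer of the vector `P`. -/
def uniqueMax {K : ℕ} (P : Fin K → ℝ) (i : Fin K) : Prop :=
  isMax P i ∧ ∀ j, isMax P j → j = i

/-- One step of the Hardy inequality: `x` is the current mean with total weight `S`, a point `y` of
weight `w ≤ κ S` is added, and `x'` is the new mean. The sum of squares about the mean
increases by `S w / (S + w) * (x - y)²`, which controls `w * x ^ 2` up to `w * y ^ 2`. -/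
lemma hardy_step {S w x y x' κ : ℝ} (hS : 0 < S) (hw : 0 ≤ w)
    (hx : (S + w) * x' = S * x + w * y) (hκ : w ≤ κ * S) :
    w * x ^ 2 + 2 * (1 + κ) * ((S + w) * x' ^ 2) ≤
      2 * (1 + κ) * (S * x ^ 2) + (4 + 2 * κ) * (w * y ^ 2) := by
  set E := S * x ^ 2 + w * y ^ 2 - (S + w) * x' ^ 2 with hE
  have key : (S + w) * E = S * (w * (x - y) ^ 2) := by
    have : (S + w) * ((S + w) * x' ^ 2) = (S * x + w * y) ^ 2 := by rw [← hx]; ring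
    rw [hE, mul_sub, this]; ring
  have hE0 : 0 ≤ E := by
    have : 0 ≤ (S + w) * E := by rw [key]; positivity
    exact nonneg_of_mul_nonneg_right this (by linarith)
  have h1 : w * (x - y) ^ 2 ≤ (1 + κ) * E := by
    refine le_of_mul_le_mul_left ?_ hS
    rw [← key]
    nlinarith [mul_le_mul_of_nonneg_right hκ hE0]
  have h2 : w * x ^ 2 ≤ 2 * (w * (x - y) ^ 2) + 2 * (w * y ^ 2) := by
    nlinarith [mul_nonneg hw (sq_nonneg (x - 2 * y))]
  have h3 : 2 * (1 + κ) * E = 2 * (1 + κ) * (S * x ^ 2) + 2 * (1 + κ) * (w * y ^ 2)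
      - 2 * (1 + κ) * ((S + w) * x' ^ 2) := by rw [hE]; ring
  linarith

lemma cumul_pos {u : ℕ → ℝ} {B : ℕ} (hu : ∀ b ∈ Icc 1 B, 0 ≤ u b) (h1 : 0 < u 1)
    {n : ℕ} (hn : 1 ≤ n) (hnB : n ≤ B) : 0 < ∑ b ∈ Icc 1 n, u b := by
  refine lt_of_lt_of_le h1 (single_le_sum (f := u) (fun b hb => hu b ?_) (by simpa using hn))
  simp only [mem_Icc] at hb ⊢; omega

lemma mean_step {u q m : ℕ → ℝ} {p : ℝ} {B : ℕ} (hu : ∀ b ∈ Icc 1 B, 0 ≤ u b) (h1 : 0 < u 1)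
    (hm : ∀ b, m b = (∑ c ∈ Icc 1 b, u c * q c) / ∑ c ∈ Icc 1 b, u c)
    {n : ℕ} (hn : 1 ≤ n) (hnB : n + 1 ≤ B) :
    (∑ c ∈ Icc 1 n, u c + u (n + 1)) * (m (n + 1) - p) =
      (∑ c ∈ Icc 1 n, u c) * (m n - p) + u (n + 1) * (q (n + 1) - p) := by
  have hS := cumul_pos hu h1 hn (by omega)
  have hS' := cumul_pos hu h1 (n := n + 1) (by omega) hnB
  rw [hm (n + 1), hm n]
  rw [sum_Icc_succ_top (by omega)] at hS' ⊢
  rw [sum_Icc_succ_top (by omega)]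
  field_simp
  ring

lemma mean_sq_le {u q m : ℕ → ℝ} {p : ℝ} {B : ℕ} (hu : ∀ b ∈ Icc 1 B, 0 ≤ u b) (h1 : 0 < u 1)
    (hm : ∀ b, m b = (∑ c ∈ Icc 1 b, u c * q c) / ∑ c ∈ Icc 1 b, u c)
    {n : ℕ} (hn : 1 ≤ n) (hnB : n ≤ B) :
    (∑ c ∈ Icc 1 n, u c) * (m n - p) ^ 2 ≤ ∑ c ∈ Icc 1 n, u c * (q c - p) ^ 2 := by
  induction n, hn using Nat.le_induction with
  | base =>
    have : m 1 = q 1 := by rw [hm]; simp [h1.ne']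
    simp [this]
  | succ n hn ih =>
    have hS := cumul_pos hu h1 hn (by omega)
    have hw : 0 ≤ u (n + 1) := hu _ (by simp; omega)
    have hx := mean_step (p := p) hu h1 hm hn hnB
    rw [sum_Icc_succ_top (by omega), sum_Icc_succ_top (by omega)]
    refine le_trans ?_ (add_le_add (ih (by omega)) le_rfl)
    set S := ∑ c ∈ Icc 1 n, u c
    -- the defect is `S w / (S + w) * (x - y) ^ 2`
    refine le_of_mul_le_mul_left ?_ (show 0 < S + u (n + 1) by linarith)
    have e : (S + u (n + 1)) * ((S + u (n + 1)) * (m (n + 1) - p) ^ 2)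
        = (S * (m n - p) + u (n + 1) * (q (n + 1) - p)) ^ 2 := by rw [← hx]; ring
    rw [e]
    nlinarith [mul_nonneg (mul_nonneg hS.le hw) (sq_nonneg ((m n - p) - (q (n + 1) - p)))]

/-- A weighted Hardy inequality in which the mean `m b` is weighted by the *next* weight
`u (b + 1)`; this shift is affordable once `u (b + 1)` is at most `κ` times the accumulated
weight. -/
lemma hardy_shifted {u q m : ℕ → ℝ} {p κ : ℝ} {B b₀ : ℕ} (hκ : 0 ≤ κ)
    (hu : ∀ b ∈ Icc 1 B, 0 ≤ u b) (h1 : 0 < u 1)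
    (hm : ∀ b, m b = (∑ c ∈ Icc 1 b, u c * q c) / ∑ c ∈ Icc 1 b, u c)
    (hb₀ : 1 ≤ b₀) (hb₀B : b₀ ≤ B)
    (hup : ∀ b ∈ Ico b₀ B, u (b + 1) ≤ κ * ∑ c ∈ Icc 1 b, u c) :
    ∑ b ∈ Ico b₀ B, u (b + 1) * (m b - p) ^ 2 ≤
      (4 + 2 * κ) * ∑ c ∈ Icc 1 B, u c * (q c - p) ^ 2 := by
  have key : ∀ n, b₀ ≤ n → n ≤ B →
      ∑ b ∈ Ico b₀ n, u (b + 1) * (m b - p) ^ 2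
        + 2 * (1 + κ) * ((∑ c ∈ Icc 1 n, u c) * (m n - p) ^ 2) ≤
      (4 + 2 * κ) * ∑ c ∈ Icc 1 n, u c * (q c - p) ^ 2 := by
    intro n hn
    induction n, hn using Nat.le_induction with
    | base =>
      intro _
      have h := mean_sq_le (p := p) hu h1 hm hb₀ hb₀B
      have h0 : 0 ≤ (∑ c ∈ Icc 1 b₀, u c) * (m b₀ - p) ^ 2 :=
        mul_nonneg (cumul_pos hu h1 hb₀ hb₀B).le (sq_nonneg _)
      simp only [Ico_self, sum_empty, zero_add]
      nlinarith
    | succ n hn ih =>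
      intro hnB
      have hS := cumul_pos hu h1 (n := n) (by omega) (by omega)
      have hw : 0 ≤ u (n + 1) := hu _ (by simp; omega)
      have hx := mean_step (p := p) hu h1 hm (n := n) (by omega) hnB
      have hs := hardy_step hS hw hx (hup n (by simp; omega))
      have := ih (by omega)
      rw [sum_Ico_succ_top hn, sum_Icc_succ_top (by omega), sum_Icc_succ_top (by omega), mul_add]
      linarith
  have h := key B hb₀B le_rfl
  have h0 : 0 ≤ (∑ c ∈ Icc 1 B, u c) * (m B - p) ^ 2 :=
    mul_nonneg (cumul_pos hu h1 (by omega) le_rfl).le (sq_nonneg _)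
  nlinarith

/-- The single-arm estimate: `v b` is the target weight `w_i(Qbar b)`, and `htrack` is the tracking
condition, read in each round as "already sampled enough, or sampled enough next". -/
lemma arm_bound {u q m v : ℕ → ℝ} {p wmin : ℝ} {B : ℕ} (hB : 4 ≤ B) (hwmin : 2 ≤ wmin * B)
    (hu : ∀ b ∈ Icc 1 B, 0 ≤ u b) (hu1 : ∀ b ∈ Icc 1 B, u b ≤ 1) (h1 : 0 < u 1)
    (hm : ∀ b, m b = (∑ c ∈ Icc 1 b, u c * q c) / ∑ c ∈ Icc 1 b, u c)
    (hv : ∀ b, wmin ≤ v b)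
    (htrack : ∀ b ∈ Ico 1 B, b * v b ≤ ∑ c ∈ Icc 1 b, u c ∨ v b / 4 ≤ u (b + 1)) :
    ∑ b ∈ Ico (B / 2) B, v b * (m b - p) ^ 2 ≤
      148 * ∑ c ∈ Icc 1 B, u c * (q c - p) ^ 2 := by
  have hBpos : (0 : ℝ) < B := by exact_mod_cast (by omega : 0 < B)
  have hw0 : 0 < wmin := by
    by_contra h
    nlinarith [mul_nonneg (sub_nonneg.2 (not_lt.1 h)) hBpos.le]
  set H := ∑ c ∈ Icc 1 B, u c * (q c - p) ^ 2 with hH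
  -- a round that leaves the arm unsampled must already have `S b ≥ b * wmin`
  have hlow : ∀ b, 1 ≤ b → b + 1 ≤ B → wmin * b / 4 ≤ ∑ c ∈ Icc 1 (b + 1), u c := by
    intro b hb
    induction b, hb using Nat.le_induction with
    | base =>
      intro hb
      have hS := cumul_pos hu h1 (n := 1) le_rfl (by omega)
      have hw : 0 ≤ u 2 := hu 2 (by simp; omega)
      rw [sum_Icc_succ_top (by omega)]
      have := hv 1
      rcases htrack 1 (by simp; omega) with h | h <;> norm_num at h ⊢ <;> norm_num at hS <;> linarith
    | succ b hb ih =>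
      intro hbB
      have := ih (by omega)
      have hw : 0 ≤ u (b + 1 + 1) := hu _ (by simp; omega)
      have hv' := hv (b + 1)
      have hb0 : (0 : ℝ) ≤ b := by positivity
      rw [sum_Icc_succ_top (by omega)]
      rcases htrack (b + 1) (by simp; omega) with h | h
      · push_cast at h ⊢
        nlinarith [mul_nonneg hb0 hw0.le, mul_le_mul_of_nonneg_left hv' hb0]
      · push_cast
        linarith
  -- for `b ≥ B / 2`, `S b ≥ wmin * (B / 8) / 4 ≥ 1 / 16`, while every weight is at most `1`
  have hup : ∀ b ∈ Ico (B / 2) B, u (b + 1) ≤ 16 * ∑ c ∈ Icc 1 b, u c := by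
    intro b hb
    rw [mem_Ico] at hb
    obtain ⟨c, rfl⟩ : ∃ c, b = c + 1 := ⟨b - 1, by omega⟩
    have h := hlow c (by omega) (by omega)
    have h' := hu1 (c + 1 + 1) (by simp; omega)
    have hc : (B : ℝ) ≤ 8 * c := by exact_mod_cast (by omega : B ≤ 8 * c)
    nlinarith [mul_le_mul_of_nonneg_left hc hw0.le]
  have hardy := hardy_shifted (p := p) (by norm_num) hu h1 hm (by omega : 1 ≤ B / 2)
    (by omega : B / 2 ≤ B) hup
  have hpt : ∀ b ∈ Ico (B / 2) B,
      v b * (m b - p) ^ 2 ≤ 4 * (u (b + 1) * (m b - p) ^ 2) + 4 / B * H := by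
    intro b hb
    rw [mem_Ico] at hb
    have hw : 0 ≤ u (b + 1) := hu _ (by simp; omega)
    have hH0 : 0 ≤ H := sum_nonneg fun c hc => mul_nonneg (hu c hc) (sq_nonneg _)
    rcases htrack b (by simp; omega) with h | h
    · have hSH : (∑ c ∈ Icc 1 b, u c) * (m b - p) ^ 2 ≤ H := by
        refine (mean_sq_le hu h1 hm (by omega) (by omega)).trans ?_
        exact sum_le_sum_of_subset_of_nonneg (Icc_subset_Icc le_rfl (by omega))
          fun c hc _ => mul_nonneg (hu c hc) (sq_nonneg _)
      have hb4 : (B : ℝ) ≤ 4 * b := by exact_mod_cast (by omega : B ≤ 4 * b)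
      have hx : 0 ≤ v b * (m b - p) ^ 2 := mul_nonneg (hw0.le.trans (hv b)) (sq_nonneg _)
      have h2 : v b * (m b - p) ^ 2 ≤ 4 / B * H := by
        rw [div_mul_eq_mul_div, le_div_iff₀ hBpos]
        nlinarith [mul_le_mul_of_nonneg_right h (sq_nonneg (m b - p)),
          mul_le_mul_of_nonneg_left hb4 hx]
      nlinarith [mul_nonneg hw (sq_nonneg (m b - p))]
    · have : 0 ≤ 4 / B * H := by positivity
      nlinarith [mul_le_mul_of_nonneg_right h (sq_nonneg (m b - p))]
  have hH0 : 0 ≤ H := sum_nonneg fun c hc => mul_nonneg (hu c hc) (sq_nonneg _)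
  calc _ ≤ ∑ b ∈ Ico (B / 2) B, (4 * (u (b + 1) * (m b - p) ^ 2) + 4 / B * H) := sum_le_sum hpt
    _ = 4 * ∑ b ∈ Ico (B / 2) B, u (b + 1) * (m b - p) ^ 2 +
        ((B - B / 2 : ℕ) : ℝ) * (4 / B * H) := by
      rw [sum_add_distrib, ← mul_sum]; simp
    _ ≤ 4 * ((4 + 2 * 16) * H) + B * (4 / B * H) := by
      gcongr
      omega
    _ = 148 * H := by field_simp; ring

/-- Theorem 3 (Trackability), deterministic form. -/
theorem almost_tracking_trackability :
    ∀ Csuf : ℝ, 0 < Csuf → Csuf < 1 →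
    ∃ Ctrack : ℝ, 0 < Ctrack ∧
      ∀ (K B : ℕ) (wmin : ℝ), 2 ≤ K → 0 < wmin → wmin ≤ 1 →
        2 / wmin ≤ (B : ℝ) →
        ∀ w : (Fin K → ℝ) → Fin K → ℝ,
          (∀ Q i, 0 ≤ w Q i) →
          (∀ Q, ∑ i, w Q i = 1) →
          (∀ Q i, wmin ≤ w Q i) →
        ∀ (P : Fin K → ℝ) (istar : Fin K), uniqueMax P istar →
        ∀ wb Qb : ℕ → Fin K → ℝ,
          (∀ b ∈ Finset.Icc 1 B, ∀ i, 0 ≤ wb b i) →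
          (∀ b ∈ Finset.Icc 1 B, ∑ i, wb b i = 1) →
          (∀ i, 0 < wb 1 i) →
        ∀ Qbar : ℕ → Fin K → ℝ,
          (∀ b i, Qbar b i =
              (∑ b' ∈ Finset.Icc 1 b, wb b' i * Qb b' i) /
              (∑ b' ∈ Finset.Icc 1 b, wb b' i)) →
          -- (a) tracking condition for insufficiently sampled arms
          (∀ b ∈ Finset.Icc 2 B, ∀ i : Fin K,
              (1 / ((b : ℝ) - 1)) * (∑ b' ∈ Finset.Icc 1 (b - 1), wb b' i)
                  ≤ w (Qbar (b - 1)) i / Csuf →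
              w (Qbar (b - 1)) i / 4 ≤ wb b i) →
          -- (b) the true best arm is never the empirical best arm
          (∀ b ∈ Finset.Icc 1 B, ¬ isMax (Qbar b) istar) →
          Ctrack * sInf {x : ℝ | ∃ Q : Fin K → ℝ, ¬ isMax Q istar ∧
              x = ∑ i, w Q i * (Q i - P i) ^ 2 / 2}
            ≤ (1 / (B : ℝ)) * ∑ b ∈ Finset.Icc 1 B, ∑ i, wb b i * (Qb b i - P i) ^ 2 / 2 := by
  intro Csuf hC0 hC1
  -- `arm_bound` summed over at least `B / 2` rounds loses a factor `2 * 148`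
  refine ⟨1 / 300, by norm_num, ?_⟩
  intro K B wmin hK hw0 _ hB w _ hwsum hwmin P istar _ wb Qb hwb hwbsum hwb1 Qbar hQbar ha hb
  have hwB : 2 ≤ wmin * B := by rwa [div_le_iff₀' hw0] at hB
  -- at least two arms force `wmin ≤ 1 / 2`, hence `B ≥ 4`
  have hB4 : 4 ≤ B := by
    have h1 : (K : ℝ) * wmin ≤ 1 := by
      rw [← hwsum 0]
      simpa using card_nsmul_le_sum univ (w 0) wmin fun i _ => hwmin 0 i
    have hK' : (2 : ℝ) ≤ K := by exact_mod_cast hK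
    have hB0 : (0 : ℝ) ≤ B := by positivity
    have : (4 : ℝ) ≤ B := by nlinarith [mul_le_mul_of_nonneg_right hK' hw0.le]
    exact_mod_cast this
  have hBpos : (0 : ℝ) < B := by exact_mod_cast (by omega : 0 < B)
  set V := sInf {x : ℝ | ∃ Q : Fin K → ℝ, ¬ isMax Q istar ∧
    x = ∑ i, w Q i * (Q i - P i) ^ 2 / 2} with hV
  have hwnn : ∀ Q i, 0 ≤ w Q i := fun Q i => hw0.le.trans (hwmin Q i)
  have hVle : ∀ b ∈ Icc 1 B, V ≤ ∑ i, w (Qbar b) i * (Qbar b i - P i) ^ 2 / 2 := by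
    intro b hb'
    refine csInf_le ⟨0, ?_⟩ ⟨Qbar b, hb b hb', rfl⟩
    rintro x ⟨Q, -, rfl⟩
    exact sum_nonneg fun i _ => by have := hwnn Q i; positivity
  have hV0 : 0 ≤ V := by
    refine Real.sInf_nonneg ?_
    rintro x ⟨Q, -, rfl⟩
    exact sum_nonneg fun i _ => by have := hwnn Q i; positivity
  have harm : ∀ i, ∑ b ∈ Ico (B / 2) B, w (Qbar b) i * (Qbar b i - P i) ^ 2 ≤
      148 * ∑ b ∈ Icc 1 B, wb b i * (Qb b i - P i) ^ 2 := by
    intro i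
    refine arm_bound (u := fun b => wb b i) (q := fun b => Qb b i) (m := fun b => Qbar b i)
      (v := fun b => w (Qbar b) i) hB4 hwB (fun b hb => hwb b hb i) ?_ (hwb1 i)
      (fun b => hQbar b i) (fun b => hwmin _ i) ?_
    · intro b hb
      rw [← hwbsum b hb]
      exact single_le_sum (f := wb b) (fun j _ => hwb b hb j) (mem_univ i)
    · intro b hb
      rw [mem_Ico] at hb
      have hbpos : (0 : ℝ) < b := by exact_mod_cast hb.1
      have h := ha (b + 1) (by simp; omega) i
      simp only [Nat.add_sub_cancel] at h
      push_cast at h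
      rw [add_sub_cancel_right] at h
      rcases le_or_gt (1 / (b : ℝ) * ∑ b' ∈ Icc 1 b, wb b' i) (w (Qbar b) i / Csuf) with h' | h'
      · exact Or.inr (h h')
      · left
        have h2 : w (Qbar b) i ≤ w (Qbar b) i / Csuf := by
          rw [le_div_iff₀ hC0]; nlinarith [hwnn (Qbar b) i]
        have h3 := h2.trans h'.le
        rw [one_div_mul_eq_div, le_div_iff₀ hbpos] at h3
        linarith
  have hsum : (B : ℝ) / 2 * V ≤
      148 * ∑ b ∈ Icc 1 B, ∑ i, wb b i * (Qb b i - P i) ^ 2 / 2 := by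
    calc (B : ℝ) / 2 * V ≤ ((B - B / 2 : ℕ) : ℝ) * V := by
          gcongr
          rw [div_le_iff₀ (by norm_num)]
          exact_mod_cast (by omega : B ≤ (B - B / 2) * 2)
      _ = ∑ b ∈ Ico (B / 2) B, V := by simp
      _ ≤ ∑ b ∈ Ico (B / 2) B, ∑ i, w (Qbar b) i * (Qbar b i - P i) ^ 2 / 2 :=
          sum_le_sum fun b hb => hVle b (by simp only [mem_Ico, mem_Icc] at hb ⊢; omega)
      _ = ∑ i, (∑ b ∈ Ico (B / 2) B, w (Qbar b) i * (Qbar b i - P i) ^ 2) / 2 := by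
          rw [sum_comm]; simp only [sum_div]
      _ ≤ ∑ i, (148 * ∑ b ∈ Icc 1 B, wb b i * (Qb b i - P i) ^ 2) / 2 :=
          sum_le_sum fun i _ => by have := harm i; linarith
      _ = _ := by
          rw [sum_comm (s := Icc 1 B), mul_sum]
          refine sum_congr rfl fun i _ => ?_
          rw [← sum_div]; ring
  rw [one_div_mul_eq_div, one_div_mul_eq_div, le_div_iff₀ hBpos]
  nlinarith [mul_nonneg hBpos.le hV0]
end

section
/- (Lemma D.1, Transformation 1.) Let B ∈ ℕ, b₀ ∈ {1,…,B}, and let v_1,…,v_B > 0 be reals such that v_b ≤ Σ_{b'=1}^{b−1} v_{b'} for every b with b₀ < b ≤ B. Let Q̃_1,…,Q̃_B ∈ ℝ and P ∈ ℝ, and define the running weighted means Q̄_b = (Σ_{b'=1}^{b} v_{b'} Q̃_{b'}) / (Σ_{b'=1}^{b} v_{b'}) for b ∈ {1,…,B}. Then Σ_{b=1}^{B} v_b (Q̃_b − P)² − (Σ_{b=1}^{B} v_b)(Q̄_B − P)² ≥ (1/2) Σ_{b=b₀+1}^{B} v_b (Q̃_b − Q̄_{b−1})². -/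
/-!
Write `V_n = ∑_{b ≤ n} v_b` and `D_n = ∑_{b ≤ n} v_b (Q̃_b - P)² - V_n (Q̄_n - P)²`. Merging one more
point into a weighted mean gives the exact increment
`D_{n+1} = D_n + V_n v_{n+1} / (V_n + v_{n+1}) * (Q̃_{n+1} - Q̄_n)²` (`merge_point`), with `D_1 = 0`.
The increment is always nonnegative, and when `v_{n+1} ≤ V_n`, that is for `n ≥ b₀`, its factor
`V_n / (V_n + v_{n+1})` is at least `1 / 2`. Summing the increments gives the bound.
-/

/-- Change in the second moment about `P` when a point `x` of weight `w` is merged into a mass `V`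
with mean `q`, the new mean being `(V * q + w * x) / (V + w)`. -/
lemma merge_point (V w q x P : ℝ) (h : V + w ≠ 0) :
    V * (q - P) ^ 2 + w * (x - P) ^ 2 - (V + w) * ((V * q + w * x) / (V + w) - P) ^ 2
      = V * w / (V + w) * (x - q) ^ 2 := by
  field_simp
  ring

/-- Lemma D.1 (Transformation 1). -/
theorem transformation_one (B b0 : ℕ) (hb0 : b0 ∈ Finset.Icc 1 B)
    (v Qt : ℕ → ℝ) (P : ℝ)
    (hv : ∀ b ∈ Finset.Icc 1 B, 0 < v b)
    (hdom : ∀ b, b0 < b → b ≤ B → v b ≤ ∑ b' ∈ Finset.Icc 1 (b - 1), v b')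
    (Qbar : ℕ → ℝ)
    (hQbar : ∀ b ∈ Finset.Icc 1 B,
        Qbar b = (∑ b' ∈ Finset.Icc 1 b, v b' * Qt b') / (∑ b' ∈ Finset.Icc 1 b, v b')) :
    (1 / 2) * ∑ b ∈ Finset.Icc (b0 + 1) B, v b * (Qt b - Qbar (b - 1)) ^ 2
      ≤ ∑ b ∈ Finset.Icc 1 B, v b * (Qt b - P) ^ 2
          - (∑ b ∈ Finset.Icc 1 B, v b) * (Qbar B - P) ^ 2 := by
  obtain ⟨hb1, hbB⟩ := Finset.mem_Icc.mp hb0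
  have key : ∀ n, 1 ≤ n → n ≤ B →
      (1 / 2) * ∑ b ∈ Finset.Icc (b0 + 1) n, v b * (Qt b - Qbar (b - 1)) ^ 2
      ≤ ∑ b ∈ Finset.Icc 1 n, v b * (Qt b - P) ^ 2
          - (∑ b ∈ Finset.Icc 1 n, v b) * (Qbar n - P) ^ 2 := by
    intro n hn
    induction n, hn using Nat.le_induction with
    | base =>
      intro h1
      have hv1 := hv 1 (Finset.mem_Icc.mpr ⟨le_rfl, h1⟩)
      have hq : Qbar 1 = Qt 1 := by
        rw [hQbar 1 (Finset.mem_Icc.mpr ⟨le_rfl, h1⟩)]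
        simp only [Finset.Icc_self, Finset.sum_singleton]
        field_simp
      rw [Finset.Icc_eq_empty (by omega : ¬ b0 + 1 ≤ 1)]
      simp [hq]
    | succ n hn ih =>
      intro hnB
      have hw := hv (n + 1) (Finset.mem_Icc.mpr ⟨by omega, hnB⟩)
      have hV : 0 < ∑ b ∈ Finset.Icc 1 n, v b := by
        refine Finset.sum_pos (fun b hb => hv b ?_) ⟨1, by simp [hn]⟩
        simp only [Finset.mem_Icc] at hb ⊢
        omega
      have hM : ∑ b ∈ Finset.Icc 1 n, v b * Qt b = (∑ b ∈ Finset.Icc 1 n, v b) * Qbar n := by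
        rw [hQbar n (Finset.mem_Icc.mpr ⟨hn, by omega⟩)]
        field_simp
      have hq := hQbar (n + 1) (Finset.mem_Icc.mpr ⟨by omega, hnB⟩)
      have ih := ih (by omega)
      have hd := hdom (n + 1)
      rw [Nat.add_sub_cancel] at hd
      simp only [Finset.sum_Icc_succ_top (show 1 ≤ n + 1 by omega)] at hq ⊢
      rw [hM] at hq
      rw [hq]
      generalize ∑ b ∈ Finset.Icc 1 n, v b = V at *
      have hm := merge_point V (v (n + 1)) (Qbar n) (Qt (n + 1)) P (by positivity)
      by_cases hbn : b0 ≤ n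
      · rw [Finset.sum_Icc_succ_top (by omega), Nat.add_sub_cancel]
        have hVw := hd (by omega) hnB
        have hfac : 1 / 2 * v (n + 1) ≤ V * v (n + 1) / (V + v (n + 1)) := by
          rw [le_div_iff₀ (by positivity)]
          nlinarith
        have := mul_le_mul_of_nonneg_right hfac (sq_nonneg (Qt (n + 1) - Qbar n))
        linarith
      · rw [Finset.Icc_eq_empty (by omega : ¬ b0 + 1 ≤ n)] at ih
        rw [Finset.Icc_eq_empty (by omega : ¬ b0 + 1 ≤ n + 1)]
        have : 0 ≤ V * v (n + 1) / (V + v (n + 1)) * (Qt (n + 1) - Qbar n) ^ 2 := by positivity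
        linarith
  exact key B (hb1.trans hbB) le_rfl
end

section
/- (Lemma D.2, Transformation 2; quadratic-form version.) Let B ∈ ℕ, let v_1,…,v_B > 0 be positive reals and x_1,…,x_B ∈ ℝ be arbitrary. Write v_{:b} = Σ_{b'=1}^{b−1} v_{b'} (with v_{:1} = 0) and x_{b:} = Σ_{b'=b}^{B} x_{b'}. Then (20/3) · Σ_{b=1}^{B} ((v_b + v_{:b})² / v_b) · x_b² ≥ Σ_{b=1}^{B} v_b · (x_{b:})². Equivalently, with Q̄_b = (Σ_{b'≤b} v_{b'} Q̃_{b'})/(Σ_{b'≤b} v_{b'}) for any reals Q̃_1,…,Q̃_B, one has (20/3) Σ_{b=1}^{B} v_b (Q̃_b − Q̄_{b−1})² ≥ Σ_{b=2}^{B} v_b (Q̄_B − Q̄_{b−1})². -/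
/-!
The quadratic inequality is a weighted discrete Hardy inequality, and it holds with constant `4`.
Let `V b = v 1 + ⋯ + v b` and `T b = x b + ⋯ + x B`. Since `v b = V b - V (b - 1)` and
`x b = T b - T (b + 1)`,
`v b * T b ^ 2 - V b * x b * (2 * T b - x b) = V b * T (b + 1) ^ 2 - V (b - 1) * T b ^ 2`,
which telescopes to `0` over `1 ≤ b ≤ B`. Adding twice this identity to the completed square
`(2 * V b * x b - v b * T b) ^ 2 / v b ≥ 0` gives the bound
`∑ v b * T b ^ 2 ≤ 4 * ∑ (V b ^ 2 / v b) * x b ^ 2`; the proof below carries it out by induction on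
the upper summation index (`hardy_partial`).

The running-mean form is the case where `x b` is the increment of the weighted means,
`x b = Qbar b - Qbar (b - 1) = (v b / V b) * (Qt b - Qbar (b - 1))`: the tails of `x` then telescope
to `Qbar B - Qbar (b - 1)`.
-/

/-- One summand of the Hardy inequality with its telescoping correction; `V` is the partial sum
before the index, `T` the tail after it. -/
lemma hardy_step_s2 {w V x T : ℝ} (hw : 0 < w) (hV : 0 ≤ V) :
    w * (x + T) ^ 2 + 2 * V * (x + T) ^ 2
      ≤ 4 * ((w + V) ^ 2 / w * x ^ 2) + 2 * (V + w) * T ^ 2 := by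
  have key : 4 * ((w + V) ^ 2 / w * x ^ 2) + 2 * (V + w) * T ^ 2
      - (w * (x + T) ^ 2 + 2 * V * (x + T) ^ 2)
      = (2 * (w + V) * x - w * (x + T)) ^ 2 / w + 2 * (w + V) * x ^ 2 := by
    field_simp
    ring
  have : 0 ≤ (2 * (w + V) * x - w * (x + T)) ^ 2 / w + 2 * (w + V) * x ^ 2 := by positivity
  linarith

lemma tail_succ (x : ℕ → ℝ) {n B : ℕ} (h : n ≤ B) :
    ∑ b ∈ Finset.Icc n B, x b = x n + ∑ b ∈ Finset.Icc (n + 1) B, x b := by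
  rw [← Finset.insert_Icc_add_one_left_eq_Icc h, Finset.sum_insert (by simp)]

/-- The Hardy inequality truncated at `n`, with the boundary term left by the telescoping. -/
lemma hardy_partial (B : ℕ) (v x : ℕ → ℝ) (hv : ∀ b ∈ Finset.Icc 1 B, 0 < v b)
    (n : ℕ) (hn : n ≤ B) :
    ∑ b ∈ Finset.Icc 1 n, v b * (∑ b' ∈ Finset.Icc b B, x b') ^ 2
      ≤ 4 * ∑ b ∈ Finset.Icc 1 n,
          ((v b + ∑ b' ∈ Finset.Icc 1 (b - 1), v b') ^ 2 / v b) * (x b) ^ 2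
        + 2 * (∑ b ∈ Finset.Icc 1 n, v b) * (∑ b ∈ Finset.Icc (n + 1) B, x b) ^ 2 := by
  induction n with
  | zero => simp
  | succ n ih =>
    have ih := ih (by omega)
    have hV : 0 ≤ ∑ b ∈ Finset.Icc 1 n, v b := Finset.sum_nonneg fun b hb =>
      (hv b (by simp only [Finset.mem_Icc] at hb ⊢; omega)).le
    have hw : 0 < v (n + 1) := hv _ (by simp only [Finset.mem_Icc]; omega)
    simp only [Finset.sum_Icc_succ_top (Nat.le_add_left 1 n), Nat.add_sub_cancel]
    have st := hardy_step_s2 (x := x (n + 1)) (T := ∑ b ∈ Finset.Icc (n + 1 + 1) B, x b) hw hV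
    rw [← tail_succ x hn] at st
    linarith

lemma sum_increments (f : ℕ → ℝ) (B b : ℕ) (_hb : 1 ≤ b) (hB : b ≤ B) :
    ∑ b' ∈ Finset.Icc b B, (f b' - f (b' - 1)) = f B - f (b - 1) := by
  induction B, hB using Nat.le_induction with
  | base => simp
  | succ n hn ih =>
    rw [Finset.sum_Icc_succ_top (by omega), ih, Nat.add_sub_cancel]
    ring

/-- Lemma D.2 (Transformation 2), quadratic-form version, together with the
equivalent running-weighted-mean formulation. -/
theorem transformation_two (B : ℕ) (v : ℕ → ℝ)
    (hv : ∀ b ∈ Finset.Icc 1 B, 0 < v b) :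
    (∀ x : ℕ → ℝ,
        ∑ b ∈ Finset.Icc 1 B, v b * (∑ b' ∈ Finset.Icc b B, x b') ^ 2
          ≤ (20 / 3) * ∑ b ∈ Finset.Icc 1 B,
              ((v b + ∑ b' ∈ Finset.Icc 1 (b - 1), v b') ^ 2 / v b) * (x b) ^ 2) ∧
    (∀ Qt : ℕ → ℝ,
        ∑ b ∈ Finset.Icc 2 B, v b *
            ((∑ b' ∈ Finset.Icc 1 B, v b' * Qt b') / (∑ b' ∈ Finset.Icc 1 B, v b')
              - (∑ b' ∈ Finset.Icc 1 (b - 1), v b' * Qt b') /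
                  (∑ b' ∈ Finset.Icc 1 (b - 1), v b')) ^ 2
          ≤ (20 / 3) * ∑ b ∈ Finset.Icc 1 B, v b *
              (Qt b - (∑ b' ∈ Finset.Icc 1 (b - 1), v b' * Qt b') /
                  (∑ b' ∈ Finset.Icc 1 (b - 1), v b')) ^ 2) := by
  have hP : ∀ n ≤ B, 0 ≤ ∑ b ∈ Finset.Icc 1 n, v b := fun n hn => Finset.sum_nonneg fun b hb =>
    (hv b (by simp only [Finset.mem_Icc] at hb ⊢; omega)).le
  have first : ∀ x : ℕ → ℝ,
      ∑ b ∈ Finset.Icc 1 B, v b * (∑ b' ∈ Finset.Icc b B, x b') ^ 2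
        ≤ (20 / 3) * ∑ b ∈ Finset.Icc 1 B,
            ((v b + ∑ b' ∈ Finset.Icc 1 (b - 1), v b') ^ 2 / v b) * (x b) ^ 2 := by
    intro x
    have h := hardy_partial B v x hv B le_rfl
    rw [Finset.Icc_eq_empty (by omega : ¬ B + 1 ≤ B)] at h
    have h0 : 0 ≤ ∑ b ∈ Finset.Icc 1 B,
        ((v b + ∑ b' ∈ Finset.Icc 1 (b - 1), v b') ^ 2 / v b) * (x b) ^ 2 :=
      Finset.sum_nonneg fun b hb => by
        have := hv b hb
        positivity
    simp only [Finset.sum_empty] at h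
    linarith
  refine ⟨first, fun Qt => ?_⟩
  -- The mean over the empty range is `0 / 0 = 0`, so the first increment is `Qt 1`.
  let q : ℕ → ℝ := fun n =>
    (∑ b' ∈ Finset.Icc 1 n, v b' * Qt b') / (∑ b' ∈ Finset.Icc 1 n, v b')
  have h := first fun b => q b - q (b - 1)
  have inc : ∀ b ∈ Finset.Icc 1 B,
      ((v b + ∑ b' ∈ Finset.Icc 1 (b - 1), v b') ^ 2 / v b) * (q b - q (b - 1)) ^ 2
        = v b * (Qt b - q (b - 1)) ^ 2 := by
    intro b hb
    have hw := hv b hb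
    obtain ⟨h1, h2⟩ := Finset.mem_Icc.mp hb
    obtain ⟨n, rfl⟩ : ∃ n, b = n + 1 := ⟨b - 1, by omega⟩
    have hV := hP n (by omega)
    -- For `n = 0` both sides vanish, in spite of the division by zero in `q 0`.
    have hq : (∑ b' ∈ Finset.Icc 1 n, v b' * Qt b') = q n * ∑ b' ∈ Finset.Icc 1 n, v b' := by
      rcases Nat.eq_zero_or_pos n with rfl | hn
      · simp
      · have : 0 < ∑ b' ∈ Finset.Icc 1 n, v b' := Finset.sum_pos
          (fun b hb => hv b (by simp only [Finset.mem_Icc] at hb ⊢; omega))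
          ⟨1, by simp only [Finset.mem_Icc]; omega⟩
        simp only [q]
        field_simp
    have hq' : q (n + 1) = (q n * (∑ b' ∈ Finset.Icc 1 n, v b') + v (n + 1) * Qt (n + 1))
        / ((∑ b' ∈ Finset.Icc 1 n, v b') + v (n + 1)) := by
      rw [← hq]
      simp only [q, Finset.sum_Icc_succ_top (Nat.le_add_left 1 n)]
    rw [Nat.add_sub_cancel, hq']
    generalize (∑ b' ∈ Finset.Icc 1 n, v b') = V at *
    have : V + v (n + 1) ≠ 0 := by positivity
    field_simp
    ring
  rw [Finset.sum_congr rfl inc] at h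
  refine le_trans ?_ h
  calc _ = ∑ b ∈ Finset.Icc 2 B,
        v b * (∑ b' ∈ Finset.Icc b B, (q b' - q (b' - 1))) ^ 2 :=
        Finset.sum_congr rfl fun b hb => by
          obtain ⟨h1, h2⟩ := Finset.mem_Icc.mp hb
          rw [sum_increments q B b (by omega) h2]
    _ ≤ _ := Finset.sum_le_sum_of_subset_of_nonneg
        (Finset.Icc_subset_Icc_left (by norm_num)) fun b hb _ =>
          mul_nonneg (hv b hb).le (sq_nonneg _)
end

section
/- (Lemma B.1, convexity of pooled allocation, Gaussian case.) Let K, B ∈ ℕ with B ≥ K. Let (w_{b,i})_{b∈[B], i∈[K]} satisfy w_{b,i} = 1 if b ≤ K and i = b, w_{b,i} = 0 if b ≤ K and i ≠ b, and w_{b,i} ∈ [0,1] for b > K. Let (Q_{b,i})_{b∈[B], i∈[K]} be reals. Define pooled means recursively by Q^pool_{1,i} = Q_{i,i} for each i ∈ [K], and Q^pool_{b−K+1,i} = (1 − w_{b,i}) Q^pool_{b−K,i} + w_{b,i} Q_{b,i} for b ∈ {K+1,…,B}. Then for every B' ∈ {K, K+1, …, B} and every P' ∈ ℝ^K: Σ_{b=1}^{B'}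 Σ_{i=1}^{K} w_{b,i}(Q_{b,i} − P'_i)²/2 ≥ Σ_{b=1}^{B'−K} Σ_{i=1}^{K} w_{b+K,i}(Q^pool_{b,i} − P'_i)²/2 + Σ_{i=1}^{K} (Q^pool_{B'−K+1,i} − P'_i)²/2. -/
/-!
The claim follows by induction on `B'`. At `B' = K` the weights on the first `K` rounds select
exactly the terms `(Q (i + 1) i - P' i) ^ 2 / 2`, so both sides coincide. Passing from `B'` to
`B' + 1`, the left side gains, in each coordinate, `w * D(Qpool_old, P') + D(Qpool_new, P')` and
loses `D(Qpool_old, P')`, while the right side gains `w * D(Q, P')`. As `Qpool_new` is the convex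
combination `(1 - w) * Qpool_old + w * Q`, convexity of `x ↦ (x - p) ^ 2 / 2` compares the two.
-/

/-- Convexity of `x ↦ (x - p) ^ 2 / 2`, with `w * (x - p) ^ 2 / 2` moved to the smaller side. -/
theorem half_sq_sub_convex_step {w : ℝ} (x y p : ℝ) (h0 : 0 ≤ w) (h1 : w ≤ 1) :
    w * (x - p) ^ 2 / 2 + ((1 - w) * x + w * y - p) ^ 2 / 2
      ≤ (x - p) ^ 2 / 2 + w * (y - p) ^ 2 / 2 := by
  -- The difference of the two sides is `w * (1 - w) * (x - y) ^ 2 / 2`.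
  have h := mul_nonneg (mul_nonneg h0 (sub_nonneg.2 h1)) (sq_nonneg (x - y))
  linarith


/-- Lemma B.1 (convexity of pooled allocation, Gaussian case). -/
theorem pooled_allocation_convexity (K B : ℕ) (hK : 1 ≤ K) (hKB : K ≤ B)
    (w : ℕ → Fin K → ℝ) (Q : ℕ → Fin K → ℝ)
    (hinit : ∀ b ∈ Finset.Icc 1 K, ∀ i : Fin K,
        w b i = if b = i.val + 1 then 1 else 0)
    (hrange : ∀ b ∈ Finset.Icc (K + 1) B, ∀ i : Fin K, 0 ≤ w b i ∧ w b i ≤ 1)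
    (Qpool : ℕ → Fin K → ℝ)
    (hpool1 : ∀ i : Fin K, Qpool 1 i = Q (i.val + 1) i)
    (hpoolrec : ∀ b ∈ Finset.Icc (K + 1) B, ∀ i : Fin K,
        Qpool (b - K + 1) i = (1 - w b i) * Qpool (b - K) i + w b i * Q b i) :
    ∀ B' ∈ Finset.Icc K B, ∀ P' : Fin K → ℝ,
      ∑ b ∈ Finset.Icc 1 (B' - K), ∑ i, w (b + K) i * (Qpool b i - P' i) ^ 2 / 2
        + ∑ i, (Qpool (B' - K + 1) i - P' i) ^ 2 / 2
      ≤ ∑ b ∈ Finset.Icc 1 B', ∑ i, w b i * (Q b i - P' i) ^ 2 / 2 := by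
  intro B' hB' P'
  obtain ⟨hKB', hB'B⟩ := Finset.mem_Icc.1 hB'
  clear hB'
  obtain ⟨n, rfl⟩ := Nat.exists_eq_add_of_le hKB'
  clear hKB'
  rw [Nat.add_sub_cancel_left]
  induction n with
  | zero =>
    simp only [Nat.add_zero, Nat.zero_add, Finset.Icc_eq_empty (by decide : ¬ (1 ≤ 0)),
      Finset.sum_empty, zero_add]
    rw [Finset.sum_comm]
    refine Finset.sum_le_sum fun i _ => ?_
    -- Only round `i + 1` carries weight for coordinate `i`.
    rw [Finset.sum_eq_single_of_mem (i.val + 1) (Finset.mem_Icc.2 ⟨by omega, i.isLt⟩)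
      (fun b hb hne => by rw [hinit b hb i, if_neg hne]; ring),
      hinit _ (Finset.mem_Icc.2 ⟨by omega, i.isLt⟩) i, if_pos rfl, hpool1, one_mul]
  | succ n ih =>
    have ih := ih (by omega)
    have hmem : K + n + 1 ∈ Finset.Icc (K + 1) B := Finset.mem_Icc.2 ⟨by omega, by omega⟩
    have hstep : ∑ i, w (K + n + 1) i * (Qpool (n + 1) i - P' i) ^ 2 / 2
          + ∑ i, (Qpool (n + 1 + 1) i - P' i) ^ 2 / 2
        ≤ ∑ i, (Qpool (n + 1) i - P' i) ^ 2 / 2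
          + ∑ i, w (K + n + 1) i * (Q (K + n + 1) i - P' i) ^ 2 / 2 := by
      rw [← Finset.sum_add_distrib, ← Finset.sum_add_distrib]
      refine Finset.sum_le_sum fun i _ => ?_
      have hr := hpoolrec _ hmem i
      rw [show K + n + 1 - K = n + 1 by omega] at hr
      rw [hr]
      exact half_sq_sub_convex_step _ _ _ (hrange _ hmem i).1 (hrange _ hmem i).2
    rw [← Nat.add_assoc K n 1, Finset.sum_Icc_succ_top (by omega : 1 ≤ n + 1),
      Finset.sum_Icc_succ_top (by omega : 1 ≤ K + n + 1),
      show n + 1 + K = K + n + 1 by omega]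
    linarith
end

section
/- (Theorem 5, constant-factor approximation of the optimal allocation for H₁.) Define w*_i(Q) = 1/(D_i(Q) · Z(Q)). There exists a universal constant C > 0 such that for every K ≥ 2, every P ∈ ℝ^K with a unique maximizer i*(P), and every Q ∈ ℝ^K such that i*(P) is not a maximizer of Q: H₁(P) · Σ_{i=1}^K w*_i(Q) · (Q_i − P_i)²/2 ≥ C/(1 + log K). -/
/-!
Put `X = ∑ i, (Q i - P i)² / D i`, `s = i*(P)`, `α = Δ_s^Q > 0`, `u i = Δ_i^Q + α` and
`T = ∑ j ≠ s, (u j)⁻²`. The quantity to be bounded below is `H₁(P) * X / (2 * Z)`.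

* Upper bound on `Z`. Each `D i` is at least the rank `#{j | Q i ≤ Q j}` of `i`: for a
  non-maximizer `i`, every `j ≠ i` with `Δ_j ≤ Δ_i` contributes at least `1` to `D i` and a
  maximizer contributes `4`; maximizers have the smallest rank and inherit the bound.
  Hence `Z` is at most the harmonic number `1 + 1/2 + ⋯ + 1/K ≤ 1 + log K`.
* Lower bound on `H₁ * X`. A termwise comparison gives `D i ≤ 4 * (u i)² * T` for all `i`, with
  `D s = 4 * α² * T`, and `D b ≤ D s` for every maximizer `b` of `Q`. Writing `d = P - Q`, this
  yields `(d i)² ≤ 4 (u i)² T X` and `(d s)² ≤ 4 α² T X`. Since `P` ranks `s` above `b` while `Q`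
  ranks `b` above `s` by `α`, also `α ≤ d s - d b`, hence `1 ≤ 16 T X`. As
  `|P s - P i| ≤ |d s| + |d i| + u i`, these combine to `(P s - P i)² ≤ 72 (u i)² T X`, and summing
  the inverses over `i ≠ s` gives `H₁ ≥ 1 / (72 X)`.

So the constant `C = 1/144` works.
-/

open Finset

/-- The largest entry of `Q` (the index set `Fin K` is nonempty in all statements below). -/
noncomputable def Qmax {K : ℕ} (Q : Fin K → ℝ) : ℝ := ⨆ j, Q j

/-- The gap `Δ_i^Q = Q* - Q_i`. -/
noncomputable def gapQ {K : ℕ} (Q : Fin K → ℝ) (i : Fin K) : ℝ := Qmax Q - Q i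

/-- `D_i(Q)` for a non-maximizing index `i`:
`(2Δ_i^Q)² · Σ_{j≠i} (Δ_j^Q + Δ_i^Q)⁻²`. -/
noncomputable def Dbase {K : ℕ} (Q : Fin K → ℝ) (i : Fin K) : ℝ :=
  (2 * gapQ Q i) ^ 2 * ∑ j ∈ univ.erase i, ((gapQ Q j + gapQ Q i) ^ 2)⁻¹

open Classical in
/-- `D_i(Q)`: for a maximizer `i` it is the minimum of `D_{i'}(Q)` over non-maximizers `i'`. -/
noncomputable def Dfun {K : ℕ} (Q : Fin K → ℝ) (i : Fin K) : ℝ :=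
  if isMax Q i then sInf {x : ℝ | ∃ i', ¬ isMax Q i' ∧ x = Dbase Q i'} else Dbase Q i

/-- The normalization factor `Z(Q) = Σ_i 1/D_i(Q)`. -/
noncomputable def Zfun {K : ℕ} (Q : Fin K → ℝ) : ℝ := ∑ i, (Dfun Q i)⁻¹

open Classical in
/-- The complexity `H₁(P) = Σ_{i ≠ i*(P)} ((max_j P_j) - P_i)⁻²`
(for `P` with a unique maximizer, the non-maximizing indices are exactly those `≠ i*(P)`). -/
noncomputable def H1 {K : ℕ} (P : Fin K → ℝ) : ℝ :=
  ∑ i ∈ univ.filter (fun i => ¬ isMax P i), ((Qmax P - P i) ^ 2)⁻¹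

/-- The stability functional `S(Q,P) = H₁(P) · Σ_i (Q_i - P_i)² / D_i(Q)`. -/
noncomputable def Sfun {K : ℕ} (Q P : Fin K → ℝ) : ℝ :=
  H1 P * ∑ i, (Q i - P i) ^ 2 / Dfun Q i

/-- The inverse ranks sum to at most the harmonic number: without ties the ranks are `1, …, #s`,
and ties only enlarge them. -/
lemma sum_inv_rank_le_harmonic {ι : Type*} [DecidableEq ι] (f : ι → ℝ) (s : Finset ι) :
    ∑ i ∈ s, ((#{j ∈ s | f j ≤ f i} : ℕ) : ℝ)⁻¹ ≤ (harmonic #s : ℝ) := by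
  induction s using Finset.induction_on_max_value f with
  | empty => simp
  | insert a s ha hmax ih =>
    rw [sum_insert ha, card_insert_of_notMem ha, harmonic_succ]
    have h1 : ({j ∈ insert a s | f j ≤ f a} : Finset ι) = insert a s := by
      apply filter_true_of_mem
      intro x hx
      rcases mem_insert.1 hx with rfl | hx
      · exact le_rfl
      · exact hmax x hx
    rw [h1, card_insert_of_notMem ha]
    have h2 : ∑ i ∈ s, ((#{j ∈ insert a s | f j ≤ f i} : ℕ) : ℝ)⁻¹
        ≤ ∑ i ∈ s, ((#{j ∈ s | f j ≤ f i} : ℕ) : ℝ)⁻¹ := by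
      apply sum_le_sum
      intro i hi
      have hpos : 0 < #{j ∈ s | f j ≤ f i} := card_pos.2 ⟨i, by simp [hi]⟩
      have hle : #{j ∈ s | f j ≤ f i} ≤ #{j ∈ insert a s | f j ≤ f i} :=
        card_le_card (filter_subset_filter _ (subset_insert _ _))
      have : (0 : ℝ) < #{j ∈ s | f j ≤ f i} := by exact_mod_cast hpos
      gcongr
    push_cast at *
    linarith

section
variable {K : ℕ} {Q : Fin K → ℝ}

lemma le_Qmax (Q : Fin K → ℝ) (i : Fin K) : Q i ≤ Qmax Q :=
  le_ciSup (Set.finite_range Q).bddAbove i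

lemma gapQ_nonneg (Q : Fin K → ℝ) (i : Fin K) : 0 ≤ gapQ Q i :=
  sub_nonneg.2 (le_Qmax Q i)

lemma Qmax_eq {i : Fin K} (h : isMax Q i) : Qmax Q = Q i :=
  have : Nonempty (Fin K) := ⟨i⟩
  le_antisymm (ciSup_le h) (le_Qmax Q i)

lemma gapQ_pos {i : Fin K} (h : ¬ isMax Q i) : 0 < gapQ Q i := by
  obtain ⟨j, hj⟩ := not_forall.1 h
  have := le_Qmax Q j
  unfold gapQ
  linarith [not_le.1 hj]

lemma exists_isMax (i : Fin K) : ∃ b, isMax Q b := by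
  have : Nonempty (Fin K) := ⟨i⟩
  exact Finite.exists_max Q

/-- At a maximizer, `Dfun` is an attained minimum of `Dbase` over the non-maximizers. -/
lemma Dfun_isMax {b s : Fin K} (hb : isMax Q b) (hs : ¬ isMax Q s) :
    (∃ i, ¬ isMax Q i ∧ Dfun Q b = Dbase Q i) ∧ ∀ i, ¬ isMax Q i → Dfun Q b ≤ Dbase Q i := by
  have hset : {x : ℝ | ∃ i', ¬ isMax Q i' ∧ x = Dbase Q i'}
      = Dbase Q '' {i | ¬ isMax Q i} := by
    ext x; simp [eq_comm]
  have hfin : (Dbase Q '' {i | ¬ isMax Q i}).Finite := Set.toFinite _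
  have hne : (Dbase Q '' {i | ¬ isMax Q i}).Nonempty := ⟨_, s, hs, rfl⟩
  have hD : Dfun Q b = sInf (Dbase Q '' {i | ¬ isMax Q i}) := by
    rw [← hset]; exact if_pos hb
  constructor
  · obtain ⟨i, hi, h⟩ := hne.csInf_mem hfin
    exact ⟨i, hi, by rw [hD, h]⟩
  · intro i hi
    rw [hD]
    exact csInf_le hfin.bddBelow ⟨i, hi, rfl⟩

lemma Dfun_not_isMax {i : Fin K} (hi : ¬ isMax Q i) : Dfun Q i = Dbase Q i := if_neg hi

/-- For a non-maximizer, `Dbase` dominates the rank in decreasing order of `Q`. -/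
lemma rank_le_Dbase {i : Fin K} (hi : ¬ isMax Q i) :
    ((#{j | Q i ≤ Q j} : ℕ) : ℝ) ≤ Dbase Q i := by
  obtain ⟨b, hb⟩ := exists_isMax (Q := Q) i
  have hpos := gapQ_pos hi
  have hbi : b ≠ i := by rintro rfl; exact hi hb
  have hgb : gapQ Q b = 0 := by rw [gapQ, Qmax_eq hb, sub_self]
  -- The summand of a maximizer equals `4`; its excess over `1` pays for counting `i` itself.
  have hterm : ∀ j ∈ univ.erase i,
      ((if Q i ≤ Q j then 1 else 0) + if j = b then 1 else 0 : ℝ)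
        ≤ (2 * gapQ Q i) ^ 2 * ((gapQ Q j + gapQ Q i) ^ 2)⁻¹ := by
    intro j _
    have hj := gapQ_nonneg Q j
    rw [← div_eq_mul_inv, le_div_iff₀ (by positivity)]
    by_cases hjb : j = b
    · subst hjb
      rw [hgb, if_pos rfl]
      split_ifs <;> nlinarith
    · rw [if_neg hjb]
      split_ifs with h
      · have : gapQ Q j ≤ gapQ Q i := by unfold gapQ; linarith
        nlinarith
      · simp; positivity
  have hsum := sum_le_sum hterm
  rw [← mul_sum] at hsum
  refine le_trans (le_of_eq ?_) hsum
  rw [sum_add_distrib, sum_ite_eq' (univ.erase i) b, if_pos (by simp [hbi])]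
  have h := add_sum_erase univ (fun j => if Q i ≤ Q j then (1 : ℝ) else 0) (mem_univ i)
  simp only [le_refl, if_true] at h
  rw [add_comm, h, sum_boole]

lemma rank_le_Dfun {s : Fin K} (hs : ¬ isMax Q s) (i : Fin K) :
    ((#{j | Q i ≤ Q j} : ℕ) : ℝ) ≤ Dfun Q i := by
  by_cases hi : isMax Q i
  · obtain ⟨k, hk, h⟩ := (Dfun_isMax hi hs).1
    rw [h]
    refine le_trans ?_ (rank_le_Dbase hk)
    have : #{j | Q i ≤ Q j} ≤ #{j | Q k ≤ Q j} :=
      card_le_card fun j hj => by simpa using (hi k).trans (by simpa using hj)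
    exact_mod_cast this
  · rw [Dfun_not_isMax hi]; exact rank_le_Dbase hi

lemma card_rank_pos (i : Fin K) : (0 : ℝ) < (#{j | Q i ≤ Q j} : ℕ) := by
  exact_mod_cast card_pos.2 ⟨i, by simp⟩

lemma Dfun_pos {s : Fin K} (hs : ¬ isMax Q s) (i : Fin K) : 0 < Dfun Q i :=
  (card_rank_pos i).trans_le (rank_le_Dfun hs i)

lemma Zfun_le {s : Fin K} (hs : ¬ isMax Q s) : Zfun Q ≤ 1 + Real.log K := by
  calc Zfun Q ≤ ∑ i, ((#{j | Q i ≤ Q j} : ℕ) : ℝ)⁻¹ :=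
        sum_le_sum fun i _ => inv_anti₀ (card_rank_pos i) (rank_le_Dfun hs i)
    _ ≤ (harmonic K : ℝ) := by
        simpa using sum_inv_rank_le_harmonic (fun j => - Q j) univ
    _ ≤ 1 + Real.log K := harmonic_le_one_add_log K

lemma Zfun_pos {s : Fin K} (hs : ¬ isMax Q s) : 0 < Zfun Q :=
  sum_pos (fun i _ => inv_pos.2 (Dfun_pos hs i)) ⟨s, mem_univ s⟩

/-- Comparison of `Dbase Q i` with the sum defining `Dbase Q s`: moving the reference index from
`s` to `i` costs at most the factor `((gapQ Q i + gapQ Q s) / gapQ Q s) ^ 2`. -/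
lemma Dbase_le {i s : Fin K} (hi : ¬ isMax Q i) (hs : ¬ isMax Q s) :
    Dbase Q i ≤ 4 * (gapQ Q i + gapQ Q s) ^ 2 *
      ∑ j ∈ univ.erase s, ((gapQ Q j + gapQ Q s) ^ 2)⁻¹ := by
  have hpi := gapQ_pos hi
  have hps := gapQ_pos hs
  by_cases his : i = s
  · subst his
    unfold Dbase
    gcongr
    nlinarith
  -- Both sums share the indices `j ≠ i, s`, and their remaining terms coincide.
  have hmem : s ∈ univ.erase i := by simp [Ne.symm his]
  have hmem' : i ∈ univ.erase s := by simp [his]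
  have hcomm : (univ.erase i).erase s = (univ.erase s).erase i := erase_right_comm
  unfold Dbase
  rw [← add_sum_erase _ _ hmem, ← add_sum_erase _ _ hmem', hcomm, add_comm (gapQ Q s) (gapQ Q i),
    mul_add, mul_add, mul_sum, mul_sum]
  apply add_le_add
  · gcongr
    nlinarith
  · apply sum_le_sum
    intro j _
    have hj := gapQ_nonneg Q j
    rw [← div_eq_mul_inv, ← div_eq_mul_inv, div_le_div_iff₀ (by positivity) (by positivity)]
    have : 2 * gapQ Q i * (gapQ Q j + gapQ Q s)
        ≤ 2 * (gapQ Q i + gapQ Q s) * (gapQ Q j + gapQ Q i) := by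
      nlinarith [mul_nonneg hj hps.le, mul_pos hpi hps]
    have h2 := pow_le_pow_left₀ (by positivity) this 2
    nlinarith [h2]

lemma Dfun_le {s : Fin K} (hs : ¬ isMax Q s) (i : Fin K) :
    Dfun Q i ≤ 4 * (gapQ Q i + gapQ Q s) ^ 2 *
      ∑ j ∈ univ.erase s, ((gapQ Q j + gapQ Q s) ^ 2)⁻¹ := by
  by_cases hi : isMax Q i
  · refine ((Dfun_isMax hi hs).2 s hs).trans (le_of_eq ?_)
    have hg : gapQ Q i = 0 := by rw [gapQ, Qmax_eq hi, sub_self]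
    rw [hg, Dbase]; ring
  · rw [Dfun_not_isMax hi]; exact Dbase_le hi hs

lemma H1_eq {P : Fin K → ℝ} {s : Fin K} (hP : uniqueMax P s) :
    H1 P = ∑ i ∈ univ.erase s, ((P s - P i) ^ 2)⁻¹ := by
  unfold H1
  rw [Qmax_eq hP.1]
  apply sum_congr _ fun _ _ => rfl
  ext i
  simp only [mem_filter, mem_univ, true_and, mem_erase, and_true]
  refine not_congr ⟨hP.2 i, ?_⟩
  rintro rfl
  exact hP.1

lemma H1_mul_ge {P : Fin K → ℝ} {s : Fin K} (hP : uniqueMax P s) (hs : ¬ isMax Q s) :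
    1 / 72 ≤ H1 P * ∑ i, (Q i - P i) ^ 2 / Dfun Q i := by
  obtain ⟨b, hb⟩ := exists_isMax (Q := Q) s
  have hbs : b ≠ s := by rintro rfl; exact hs hb
  have hα := gapQ_pos hs
  have hgb : gapQ Q b = 0 := by rw [gapQ, Qmax_eq hb, sub_self]
  set α := gapQ Q s with hαdef
  set T := ∑ j ∈ univ.erase s, ((gapQ Q j + α) ^ 2)⁻¹ with hT
  set X := ∑ i, (Q i - P i) ^ 2 / Dfun Q i with hX
  have hu : ∀ i, 0 < gapQ Q i + α := fun i => by linarith [gapQ_nonneg Q i]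
  have hTpos : 0 < T :=
    sum_pos (fun j _ => inv_pos.2 (pow_pos (hu j) 2)) ⟨b, by simp [hbs]⟩
  have hnn : ∀ i, 0 ≤ (Q i - P i) ^ 2 / Dfun Q i := fun i =>
    div_nonneg (sq_nonneg _) (Dfun_pos hs i).le
  have hX0 : 0 ≤ X := sum_nonneg fun i _ => hnn i
  have hd : ∀ i, (Q i - P i) ^ 2 ≤ X * Dfun Q i := fun i =>
    (div_le_iff₀ (Dfun_pos hs i)).1 (single_le_sum (fun j _ => hnn j) (mem_univ i))
  have hdi : ∀ i, (Q i - P i) ^ 2 ≤ X * (4 * (gapQ Q i + α) ^ 2 * T) := fun i =>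
    (hd i).trans (mul_le_mul_of_nonneg_left (Dfun_le hs i) hX0)
  have hds : (Q s - P s) ^ 2 ≤ X * (4 * α ^ 2 * T) := by
    refine (hd s).trans (le_of_eq ?_)
    rw [Dfun_not_isMax hs, Dbase, ← hαdef, ← hT]; ring
  have hdb : (Q b - P b) ^ 2 ≤ X * (4 * α ^ 2 * T) := by
    have := hdi b
    rwa [hgb, zero_add] at this
  -- Going from `Q` to `P` must close the gap `α` between `s` and `b`.
  have hα16 : α ^ 2 ≤ 16 * (X * T) * α ^ 2 := by
    have h1 : α ≤ (P s - Q s) - (P b - Q b) := by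
      have := hP.1 b
      have h2 : α = Q b - Q s := by rw [hαdef, gapQ, Qmax_eq hb]
      linarith
    have h2 := pow_le_pow_left₀ hα.le h1 2
    nlinarith [sq_nonneg ((P s - Q s) + (P b - Q b))]
  have hXT : 1 ≤ 16 * (X * T) := by
    have := pow_pos hα 2
    by_contra! h
    nlinarith
  have hXpos : 0 < X := by
    rcases hX0.eq_or_lt with h | h
    · rw [← h] at hXT; norm_num at hXT
    · exact h
  have hgap : ∀ i, (P s - P i) ^ 2 ≤ 72 * (X * T) * (gapQ Q i + α) ^ 2 := by
    intro i
    have h1 := hdi i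
    have hai := gapQ_nonneg Q i
    have hα2 : α ^ 2 ≤ (gapQ Q i + α) ^ 2 := by gcongr; linarith
    have hXT0 : 0 ≤ X * T := by positivity
    have hu2 : (gapQ Q i + α) ^ 2 ≤ 16 * (X * T) * (gapQ Q i + α) ^ 2 :=
      le_mul_of_one_le_left (sq_nonneg _) hXT
    have hs2 : (Q s - P s) ^ 2 ≤ 4 * (X * T) * (gapQ Q i + α) ^ 2 := by
      nlinarith [mul_le_mul_of_nonneg_left hα2 hXT0]
    have hQ : (Q s - Q i) ^ 2 ≤ (gapQ Q i + α) ^ 2 := by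
      have : Q s - Q i = gapQ Q i - α := by rw [hαdef, gapQ, gapQ]; ring
      rw [this]
      nlinarith [mul_nonneg hai hα.le]
    have h3 : (P s - P i) ^ 2
        ≤ 3 * ((Q s - P s) ^ 2 + (Q i - P i) ^ 2 + (Q s - Q i) ^ 2) := by
      nlinarith [sq_nonneg ((P s - Q s) - (Q i - P i)), sq_nonneg ((P s - Q s) - (Q s - Q i)),
        sq_nonneg ((Q i - P i) - (Q s - Q i))]
    nlinarith
  have hH : 1 / (72 * X) ≤ H1 P := by
    rw [H1_eq hP]
    calc 1 / (72 * X) = (72 * (X * T))⁻¹ * T := by field_simp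
      _ = ∑ i ∈ univ.erase s, (72 * (X * T))⁻¹ * ((gapQ Q i + α) ^ 2)⁻¹ := by
          rw [hT, mul_sum]
      _ ≤ ∑ i ∈ univ.erase s, ((P s - P i) ^ 2)⁻¹ := by
          apply sum_le_sum
          intro i hi
          rw [← mul_inv]
          -- Strict positivity keeps `0⁻¹ = 0` out of play: `s` is the only maximizer of `P`.
          have hne : P s - P i ≠ 0 := by
            intro h
            refine (mem_erase.1 hi).1 (hP.2 i fun j => ?_)
            linarith [hP.1 j]
          exact inv_anti₀ (by positivity) (hgap i)
  calc (1 : ℝ) / 72 = 1 / (72 * X) * X := by field_simp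
    _ ≤ H1 P * X := mul_le_mul_of_nonneg_right hH hX0
end

/-- Theorem 5: the allocation `w*_i(Q) = 1/(D_i(Q)·Z(Q))` is a constant-factor
approximation of the optimal allocation for the risk measure `H₁`. -/
theorem wstar_constant_factor_approximation :
    ∃ C : ℝ, 0 < C ∧
      ∀ (K : ℕ), 2 ≤ K →
        ∀ (P Q : Fin K → ℝ) (istar : Fin K),
          uniqueMax P istar → ¬ isMax Q istar →
          C / (1 + Real.log K) ≤
            H1 P * ∑ i, (1 / (Dfun Q i * Zfun Q)) * ((Q i - P i) ^ 2 / 2) := by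
  refine ⟨1 / 144, by norm_num, ?_⟩
  intro K hK P Q s hP hs
  have hZ := Zfun_pos hs
  have hlog : 0 < 1 + Real.log K := hZ.trans_le (Zfun_le hs)
  have hsum : H1 P * ∑ i, (1 / (Dfun Q i * Zfun Q)) * ((Q i - P i) ^ 2 / 2)
      = (H1 P * ∑ i, (Q i - P i) ^ 2 / Dfun Q i) / (2 * Zfun Q) := by
    rw [mul_div_assoc, sum_div]
    congr 1
    refine sum_congr rfl fun i _ => ?_
    have := (Dfun_pos hs i).ne'
    field_simp
  rw [hsum]
  calc (1 : ℝ) / 144 / (1 + Real.log K) ≤ 1 / 144 / Zfun Q := by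
        gcongr; exact Zfun_le hs
    _ = 1 / 72 / (2 * Zfun Q) := by field_simp; norm_num
    _ ≤ _ := by gcongr; exact H1_mul_ge hP hs
end

section
/- (Claim G.2.) Let K ≥ 2, let Q ∈ ℝ^K satisfy Q_1 > Q_2 ≥ … ≥ Q_K, and fix j ∈ {2,…,K}. Then inf { S(Q,P) : P ∈ ℝ^K with unique maximizer j } = inf { S(Q,P) : P ∈ ℝ^K with unique maximizer j, P_j ≥ Q_j, and P_i ≤ Q_i for all i ≠ j }. -/
/-!
Every competitor `P` with unique maximizer `j` is dominated by one satisfying the extra constraints.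
Let `c = max 0 (Q j - P j)`, shift all of `P` up by `c`, and then truncate each coordinate `i ≠ j`
from above at `Q i`. The shift keeps all gaps `P j - P i`, and the truncation only enlarges them, so
`H₁` does not increase. Each distance `|Q i - P i|` does not increase either: a coordinate `i ≠ j`
that starts above `Q i` is sent to `Q i`, and one that starts below moves up without passing `Q i`;
the coordinate `j` becomes `max (P j) (Q j)`. As the weights `D_i(Q)` are nonnegative, `S(Q, ·)`
does not increase.
-/

open Finset

lemma uniqueMax_iff_forall_lt {K : ℕ} (P : Fin K → ℝ) (j : Fin K) :
    uniqueMax P j ↔ ∀ i, i ≠ j → P i < P j := by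
  constructor
  · rintro ⟨h1, h2⟩ i hi
    refine lt_of_le_of_ne (h1 i) fun he => hi (h2 i fun k => ?_)
    rw [he]
    exact h1 k
  · intro h
    refine ⟨fun i => ?_, fun i hi => ?_⟩
    · by_cases hij : i = j
      · rw [hij]
      · exact (h i hij).le
    · by_contra hij
      exact absurd (hi j) (not_le.mpr (h i hij))

lemma H1_eq_of_uniqueMax {K : ℕ} (P : Fin K → ℝ) (j : Fin K) (h : uniqueMax P j) :
    H1 P = ∑ i ∈ univ.erase j, ((P j - P i) ^ 2)⁻¹ := by
  classical
  have : Nonempty (Fin K) := ⟨j⟩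
  have hmax : Qmax P = P j :=
    le_antisymm (ciSup_le h.1) (le_ciSup (Set.finite_range P).bddAbove j)
  unfold H1
  rw [hmax]
  refine Finset.sum_congr ?_ fun _ _ => rfl
  ext i
  simp only [mem_filter, mem_univ, true_and, mem_erase, and_true]
  constructor
  · rintro hi rfl
    exact hi h.1
  · exact fun hi hm => hi (h.2 i hm)

lemma Dbase_nonneg {K : ℕ} (Q : Fin K → ℝ) (i : Fin K) : 0 ≤ Dbase Q i := by
  unfold Dbase
  positivity

lemma Dfun_nonneg {K : ℕ} (Q : Fin K → ℝ) (i : Fin K) : 0 ≤ Dfun Q i := by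
  unfold Dfun
  split_ifs
  · apply Real.sInf_nonneg
    rintro x ⟨i', -, rfl⟩
    exact Dbase_nonneg Q i'
  · exact Dbase_nonneg Q i

lemma H1_nonneg {K : ℕ} (P : Fin K → ℝ) : 0 ≤ H1 P := by
  unfold H1
  positivity

lemma Sfun_nonneg {K : ℕ} (Q P : Fin K → ℝ) : 0 ≤ Sfun Q P :=
  mul_nonneg (H1_nonneg P)
    (Finset.sum_nonneg fun i _ => div_nonneg (sq_nonneg _) (Dfun_nonneg Q i))

/-- The shift-and-truncate construction: a competitor can be made to satisfy the sign constraints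
without increasing the stability functional. -/
lemma exists_constrained_le {K : ℕ} (Q P : Fin K → ℝ) (j : Fin K) (hP : uniqueMax P j) :
    ∃ P' : Fin K → ℝ, uniqueMax P' j ∧ Q j ≤ P' j ∧ (∀ i, i ≠ j → P' i ≤ Q i) ∧
      Sfun Q P' ≤ Sfun Q P := by
  have hlt := (uniqueMax_iff_forall_lt P j).1 hP
  set c := max 0 (Q j - P j) with hc
  have hc0 : 0 ≤ c := le_max_left _ _
  have hcj : Q j - P j ≤ c := le_max_right _ _
  let P' : Fin K → ℝ := fun i => if i = j then P j + c else min (P i + c) (Q i)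
  have hj : P' j = P j + c := if_pos rfl
  have hi : ∀ i, i ≠ j → P' i = min (P i + c) (Q i) := fun i h => if_neg h
  have hgap : ∀ i, i ≠ j → P j - P i ≤ P' j - P' i := by
    intro i h
    rw [hj, hi i h]
    linarith [min_le_left (P i + c) (Q i)]
  have hP' : uniqueMax P' j :=
    (uniqueMax_iff_forall_lt P' j).2 fun i h => by linarith [hgap i h, hlt i h]
  have hdist : ∀ i, (Q i - P' i) ^ 2 ≤ (Q i - P i) ^ 2 := by
    intro i
    by_cases h : i = j
    · subst h
      rw [hj]
      rcases le_total 0 (Q i - P i) with h0 | h0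
      · rw [hc, max_eq_right h0]
        nlinarith [sq_nonneg (Q i - P i)]
      · rw [hc, max_eq_left h0, add_zero]
    · rw [hi i h]
      rcases le_total (P i + c) (Q i) with h0 | h0
      · rw [min_eq_left h0]
        exact pow_le_pow_left₀ (by linarith) (by linarith) 2
      · rw [min_eq_right h0, sub_self]
        nlinarith [sq_nonneg (Q i - P i)]
  refine ⟨P', hP', by rw [hj]; linarith, fun i h => by rw [hi i h]; exact min_le_right _ _, ?_⟩
  have hH : H1 P' ≤ H1 P := by
    rw [H1_eq_of_uniqueMax P' j hP', H1_eq_of_uniqueMax P j hP]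
    refine Finset.sum_le_sum fun i h => ?_
    have hij := Finset.ne_of_mem_erase h
    have hpos : 0 < P j - P i := sub_pos.2 (hlt i hij)
    exact inv_anti₀ (pow_pos hpos 2) (pow_le_pow_left₀ hpos.le (hgap i hij) 2)
  exact mul_le_mul hH
    (Finset.sum_le_sum fun i _ => div_le_div_of_nonneg_right (hdist i) (Dfun_nonneg Q i))
    (Finset.sum_nonneg fun i _ => div_nonneg (sq_nonneg _) (Dfun_nonneg Q i)) (H1_nonneg P)

/-- Claim G.2. -/
theorem claim_G2 (K : ℕ) (hK : 2 ≤ K) (Q : Fin K → ℝ)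
    (hanti : ∀ i j : Fin K, i ≤ j → Q j ≤ Q i)
    (hstrict : Q ⟨1, by omega⟩ < Q ⟨0, by omega⟩)
    (j : Fin K) (hj : 0 < j.val) :
    sInf {x : ℝ | ∃ P : Fin K → ℝ, uniqueMax P j ∧ x = Sfun Q P} =
      sInf {x : ℝ | ∃ P : Fin K → ℝ, uniqueMax P j ∧ Q j ≤ P j ∧
          (∀ i, i ≠ j → P i ≤ Q i) ∧ x = Sfun Q P} := by
  have hne : uniqueMax (fun i => if i = j then (1 : ℝ) else 0) j :=
    (uniqueMax_iff_forall_lt _ j).2 fun i h => by simp [h]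
  obtain ⟨P₀, h1, h2, h3, -⟩ := exists_constrained_le Q _ j hne
  apply le_antisymm
  · refine csInf_le_csInf ⟨0, ?_⟩ ⟨_, P₀, h1, h2, h3, rfl⟩ ?_
    · rintro x ⟨P, -, rfl⟩
      exact Sfun_nonneg Q P
    · rintro x ⟨P, hP, -, -, rfl⟩
      exact ⟨P, hP, rfl⟩
  · refine le_csInf ⟨_, _, hne, rfl⟩ ?_
    rintro x ⟨P, hP, rfl⟩
    obtain ⟨P', g1, g2, g3, g4⟩ := exists_constrained_le Q P j hP
    refine le_trans (csInf_le ⟨0, ?_⟩ ⟨P', g1, g2, g3, rfl⟩) g4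
    rintro x ⟨P, -, -, -, rfl⟩
    exact Sfun_nonneg Q P
end

section
/- (Claim G.5.) There exists a universal constant c > 0 such that for every K ≥ 2, every Q ∈ ℝ^K with Q_1 > Q_2 ≥ … ≥ Q_K, and every j ∈ {2,…,K}: inf { S(Q,P) : P ∈ ℝ^K has unique maximizer j, Q_j ≤ P_j ≤ 2Q_1 − Q_j, Q_i − (P_j − Q_j) ≤ P_i ≤ Q_i for all i < j, and P_i ≤ Q_i for all i > j } ≥ c. -/
/-!
Write `Δ_i` for the gaps of `Q`, `x_i = Q_i - P_i`, `D_i` for `Dfun Q i` and `s = Σ_i x_i² / D_i`.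
Two facts give control of `s` in terms of the single weight `D_j`:

* the top index and `j` together contribute at least `Δ_j² / (2 D_j)` to `s`, because `D_0 ≤ D_j`
  and `j` can overtake the top index only if the two of them move by more than `Δ_j` in total;
* an index `i > j` contributes at least `(Δ_j / Δ_i)² x_i² / D_j`, because `D_i / Δ_i²` is
  nonincreasing in `i` (`Dbase_compare`).

Hence for every `i ≠ j` the gap `P_j - P_i`, which is at most `Δ_j + Δ_i + x_i`, satisfies
`(P_j - P_i)² Δ_j² ≤ 18 (Δ_i + Δ_j)² s D_j` (`key_term`). Dividing and summing over `i ≠ j`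
turns the left factor `H₁(P)` into `Σ_{i ≠ j} (Δ_i + Δ_j)⁻²`, which by definition is
`D_j / (4 Δ_j²)`, so that `S(Q,P) ≥ 1/72`.
-/


open Finset

section aux

variable {K : ℕ}

lemma Qmax_eq_of_isMax {Q : Fin K → ℝ} {z : Fin K} (h : isMax Q z) : Qmax Q = Q z := by
  have : Nonempty (Fin K) := ⟨z⟩
  exact le_antisymm (ciSup_le h) (le_ciSup (Set.finite_range Q).bddAbove z)

lemma gap_nonneg {Q : Fin K → ℝ} {z : Fin K} (h : isMax Q z) (i : Fin K) : 0 ≤ gapQ Q i := by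
  rw [gapQ, Qmax_eq_of_isMax h]
  linarith [h i]

/-- The term of the maximizer alone already contributes `4`. -/
lemma four_le_Dbase {Q : Fin K → ℝ} {z i : Fin K} (h : isMax Q z) (hi : Q i < Q z) :
    4 ≤ Dbase Q i := by
  have hz : gapQ Q z = 0 := by rw [gapQ, Qmax_eq_of_isMax h, sub_self]
  have hp : 0 < gapQ Q i := by
    rw [gapQ, Qmax_eq_of_isMax h]; linarith
  have hzi : z ∈ univ.erase i := by
    refine mem_erase.2 ⟨?_, mem_univ _⟩
    rintro rfl
    exact lt_irrefl _ hi
  have h1 : ((gapQ Q i) ^ 2)⁻¹ ≤ ∑ j ∈ univ.erase i, ((gapQ Q j + gapQ Q i) ^ 2)⁻¹ := by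
    have := single_le_sum (f := fun j => ((gapQ Q j + gapQ Q i) ^ 2)⁻¹)
      (fun j _ => by positivity) hzi
    simpa [hz] using this
  calc (4 : ℝ) = (2 * gapQ Q i) ^ 2 * ((gapQ Q i) ^ 2)⁻¹ := by field_simp; norm_num
    _ ≤ _ := by unfold Dbase; gcongr

/-- `D_i / Δ_i²` is nonincreasing in the gap. -/
lemma Dbase_compare {Q : Fin K → ℝ} {z i j : Fin K} (h : isMax Q z) (hj : Q j < Q z)
    (hij : Q i ≤ Q j) (hne : i ≠ j) :
    Dbase Q i * gapQ Q j ^ 2 ≤ gapQ Q i ^ 2 * Dbase Q j := by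
  have hp : 0 < gapQ Q j := by
    rw [gapQ, Qmax_eq_of_isMax h]; linarith
  have hle : gapQ Q j ≤ gapQ Q i := by unfold gapQ; linarith
  -- The `j`-term of the first sum equals the `i`-term of the second; the rest compare termwise.
  have hsum : ∑ k ∈ univ.erase i, ((gapQ Q k + gapQ Q i) ^ 2)⁻¹
      ≤ ∑ k ∈ univ.erase j, ((gapQ Q k + gapQ Q j) ^ 2)⁻¹ := by
    rw [← add_sum_erase (univ.erase i) _ (mem_erase.2 ⟨hne.symm, mem_univ j⟩),
      ← add_sum_erase (univ.erase j) _ (mem_erase.2 ⟨hne, mem_univ i⟩),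
      erase_right_comm, add_comm (gapQ Q j)]
    gcongr with k _
    · have := gap_nonneg h k
      positivity
    · exact add_nonneg (gap_nonneg h k) hp.le
  unfold Dbase
  calc _ = 4 * gapQ Q i ^ 2 * gapQ Q j ^ 2 *
        ∑ k ∈ univ.erase i, ((gapQ Q k + gapQ Q i) ^ 2)⁻¹ := by ring
    _ ≤ 4 * gapQ Q i ^ 2 * gapQ Q j ^ 2 *
        ∑ k ∈ univ.erase j, ((gapQ Q k + gapQ Q j) ^ 2)⁻¹ := by gcongr
    _ = _ := by ring

lemma Dfun_eq {Q : Fin K → ℝ} {z i : Fin K} (hi : Q i < Q z) : Dfun Q i = Dbase Q i := by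
  rw [Dfun, if_neg]
  intro hm
  exact absurd (hm z) (not_le.2 hi)

lemma Dfun_max_le {Q : Fin K → ℝ} {z j : Fin K} (h : isMax Q z) (hj : Q j < Q z) :
    0 < Dfun Q z ∧ Dfun Q z ≤ Dbase Q j := by
  have hnm : ¬ isMax Q j := fun hm => absurd (hm z) (not_le.2 hj)
  have hlb : ∀ x ∈ {x : ℝ | ∃ i', ¬ isMax Q i' ∧ x = Dbase Q i'}, 4 ≤ x := by
    rintro x ⟨i, hi, rfl⟩
    refine four_le_Dbase h (lt_of_not_ge fun hge => hi fun k => (h k).trans hge)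
  rw [Dfun, if_pos h]
  exact ⟨lt_of_lt_of_le (by norm_num) (le_csInf ⟨_, j, hnm, rfl⟩ hlb),
    csInf_le ⟨4, hlb⟩ ⟨j, hnm, rfl⟩⟩

lemma term_nonneg {Q : Fin K → ℝ} {z : Fin K} (h : isMax Q z) (hz : ∀ i, i ≠ z → Q i < Q z)
    {j : Fin K} (hj : Q j < Q z) (P : Fin K → ℝ) (i : Fin K) :
    0 ≤ (Q i - P i) ^ 2 / Dfun Q i := by
  have hD : 0 ≤ Dfun Q i := by
    rcases eq_or_ne i z with rfl | hi
    · exact (Dfun_max_le h hj).1.le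
    · rw [Dfun_eq (hz i hi)]
      linarith [four_le_Dbase h (hz i hi)]
  positivity

/-- The contribution of the maximizer `z` of `Q` and of `j`, which overtakes it in `P`. -/
lemma pair_bound {Q P : Fin K → ℝ} {z j : Fin K} (h : isMax Q z) (hj : Q j < Q z)
    (h0 : P z ≤ Q z) (hPj : Q j ≤ P j) (hP : P z < P j) :
    gapQ Q j ^ 2 / (2 * Dbase Q j) ≤
      (Q z - P z) ^ 2 / Dfun Q z + (Q j - P j) ^ 2 / Dfun Q j := by
  obtain ⟨hpos, hle⟩ := Dfun_max_le h hj
  have hDj : 0 < Dbase Q j := lt_of_lt_of_le hpos hle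
  rw [Dfun_eq hj, gapQ, Qmax_eq_of_isMax h]
  have h1 : (Q z - P z) ^ 2 / Dbase Q j ≤ (Q z - P z) ^ 2 / Dfun Q z := by gcongr
  refine le_trans ?_ (add_le_add_left h1 _)
  rw [← add_div, div_le_div_iff₀ (by positivity) hDj]
  have h2 : (Q z - Q j) ^ 2 ≤ 2 * ((Q z - P z) ^ 2 + (Q j - P j) ^ 2) := by
    nlinarith [sq_nonneg ((Q z - P z) - (P j - Q j))]
  nlinarith [mul_le_mul_of_nonneg_right h2 hDj.le]

/-- The gap of `P` at `i ≠ j` is at most a multiple of `(Δ_i + Δ_j) / Δ_j` times `√(s D_j)`. -/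
lemma key_term {Q P : Fin K → ℝ} {z j : Fin K} (hzmin : ∀ i, z ≤ i)
    (hQ : ∀ i j : Fin K, i ≤ j → Q j ≤ Q i) (hz : ∀ i, i ≠ z → Q i < Q z) (hjz : z < j)
    (hlow : Q j ≤ P j) (hup : P j ≤ 2 * Q z - Q j)
    (hlt : ∀ i, i < j → Q i - (P j - Q j) ≤ P i ∧ P i ≤ Q i)
    (hmax : ∀ i, i ≠ j → P i < P j)
    {i : Fin K} (hi : i ≠ j) :
    (P j - P i) ^ 2 * gapQ Q j ^ 2 ≤
      18 * (gapQ Q i + gapQ Q j) ^ 2 * ((∑ k, (Q k - P k) ^ 2 / Dfun Q k) * Dbase Q j) := by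
  have hm : isMax Q z := fun k => hQ z k (hzmin k)
  have hj : Q j < Q z := hz j hjz.ne'
  have hDj : 0 < Dbase Q j := by linarith [four_le_Dbase hm hj]
  have hpair := pair_bound hm hj (hlt z hjz).2 hlow (hmax z hjz.ne)
  have hnn := term_nonneg hm hz hj P
  have hgi := gap_nonneg hm i
  have hgiQ : gapQ Q i = Q z - Q i := by rw [gapQ, Qmax_eq_of_isMax hm]
  have hgjQ : gapQ Q j = Q z - Q j := by rw [gapQ, Qmax_eq_of_isMax hm]
  have hgj : 0 < gapQ Q j := by rw [hgjQ]; linarith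
  have hPi := hmax i hi
  set s := ∑ k, (Q k - P k) ^ 2 / Dfun Q k with hs
  rcases lt_or_gt_of_ne hi with hij | hij
  · have hs1 : gapQ Q j ^ 2 / (2 * Dbase Q j) ≤ s := by
      refine hpair.trans ?_
      rw [hs, ← sum_pair hjz.ne (f := fun k => (Q k - P k) ^ 2 / Dfun Q k)]
      exact sum_le_sum_of_subset_of_nonneg (subset_univ _) fun k _ _ => hnn k
    have hs2 : gapQ Q j ^ 2 ≤ 2 * (s * Dbase Q j) := by
      rw [div_le_iff₀ (by positivity)] at hs1
      linarith
    have hg : (P j - P i) ^ 2 ≤ (3 * (gapQ Q i + gapQ Q j)) ^ 2 := by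
      refine pow_le_pow_left₀ (by linarith) ?_ 2
      linarith [(hlt i hij).1]
    calc (P j - P i) ^ 2 * gapQ Q j ^ 2
        ≤ (3 * (gapQ Q i + gapQ Q j)) ^ 2 * (2 * (s * Dbase Q j)) := by gcongr
      _ = _ := by ring
  · have hiz : i ≠ z := (hjz.trans hij).ne'
    have hs1 : (Q i - P i) ^ 2 / Dfun Q i + gapQ Q j ^ 2 / (2 * Dbase Q j) ≤ s := by
      refine (add_le_add_right hpair _).trans ?_
      rw [hs, ← sum_pair hjz.ne (f := fun k => (Q k - P k) ^ 2 / Dfun Q k),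
        ← sum_insert (f := fun k => (Q k - P k) ^ 2 / Dfun Q k) (a := i) (by simp [hi, hiz])]
      exact sum_le_sum_of_subset_of_nonneg (subset_univ _) fun k _ _ => hnn k
    have hDi : 0 < Dbase Q i := by linarith [four_le_Dbase hm (hz i hiz)]
    have hcmp := Dbase_compare hm hj (hQ j i hij.le) hi
    have hgij : gapQ Q j ≤ gapQ Q i := by linarith [hQ j i hij.le]
    have hgi' : 0 < gapQ Q i := by linarith
    rw [Dfun_eq (hz i hiz)] at hs1
    have hx : (Q i - P i) ^ 2 * gapQ Q j ^ 2 ≤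
        gapQ Q i ^ 2 * ((Q i - P i) ^ 2 / Dbase Q i * Dbase Q j) := by
      have := mul_le_mul_of_nonneg_left hcmp (by positivity : 0 ≤ (Q i - P i) ^ 2 / Dbase Q i)
      calc _ = (Q i - P i) ^ 2 / Dbase Q i * (Dbase Q i * gapQ Q j ^ 2) := by field_simp
        _ ≤ _ := this
        _ = _ := by ring
    have hs2 : (Q i - P i) ^ 2 / Dbase Q i * Dbase Q j + gapQ Q j ^ 2 / 2 ≤ s * Dbase Q j := by
      calc _ = ((Q i - P i) ^ 2 / Dbase Q i + gapQ Q j ^ 2 / (2 * Dbase Q j)) * Dbase Q j := by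
            field_simp
        _ ≤ _ := by gcongr
    have hg : (P j - P i) ^ 2 ≤ 2 * (gapQ Q i + gapQ Q j) ^ 2 + 2 * (Q i - P i) ^ 2 := by
      have : (P j - P i) ^ 2 ≤ ((gapQ Q i + gapQ Q j) + (Q i - P i)) ^ 2 :=
        pow_le_pow_left₀ (by linarith) (by linarith) 2
      nlinarith [sq_nonneg ((gapQ Q i + gapQ Q j) - (Q i - P i))]
    have hxn : 0 ≤ (Q i - P i) ^ 2 / Dbase Q i * Dbase Q j := by positivity
    set t := (Q i - P i) ^ 2 / Dbase Q i * Dbase Q j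
    have ht : gapQ Q i ^ 2 * t ≤ (gapQ Q i + gapQ Q j) ^ 2 * t := by
      gcongr
      linarith
    calc (P j - P i) ^ 2 * gapQ Q j ^ 2
        ≤ (2 * (gapQ Q i + gapQ Q j) ^ 2 + 2 * (Q i - P i) ^ 2) * gapQ Q j ^ 2 := by gcongr
      _ ≤ 18 * (gapQ Q i + gapQ Q j) ^ 2 * (t + gapQ Q j ^ 2 / 2) := by
          have h1 : 0 ≤ (gapQ Q i + gapQ Q j) ^ 2 * t := by positivity
          have h2 : 0 ≤ (gapQ Q i + gapQ Q j) ^ 2 * gapQ Q j ^ 2 := by positivity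
          nlinarith
      _ ≤ _ := by gcongr

lemma S_lower {Q P : Fin K → ℝ} {z j : Fin K} (hzmin : ∀ i, z ≤ i)
    (hQ : ∀ i j : Fin K, i ≤ j → Q j ≤ Q i) (hz : ∀ i, i ≠ z → Q i < Q z) (hjz : z < j)
    (hu : uniqueMax P j) (hlow : Q j ≤ P j) (hup : P j ≤ 2 * Q z - Q j)
    (hlt : ∀ i, i < j → Q i - (P j - Q j) ≤ P i ∧ P i ≤ Q i) :
    1 / 72 ≤ Sfun Q P := by
  classical
  have hm : isMax Q z := fun k => hQ z k (hzmin k)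
  have hj : Q j < Q z := hz j hjz.ne'
  have hDj : 0 < Dbase Q j := by linarith [four_le_Dbase hm hj]
  have hgj : 0 < gapQ Q j := by rw [gapQ, Qmax_eq_of_isMax hm]; linarith
  have hmax : ∀ i, i ≠ j → P i < P j := fun i hi =>
    lt_of_not_ge fun hge => hi (hu.2 i fun k => (hu.1 k).trans hge)
  have hfilter : univ.filter (fun i => ¬ isMax P i) = univ.erase j := by
    ext i
    simp only [mem_filter, mem_univ, true_and, mem_erase, and_true]
    refine not_congr ⟨hu.2 i, ?_⟩
    rintro rfl
    exact hu.1
  have hH : H1 P = ∑ i ∈ univ.erase j, ((P j - P i) ^ 2)⁻¹ := by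
    rw [H1, Qmax_eq_of_isMax hu.1, ← hfilter]
  rw [Sfun, hH, sum_mul]
  set s := ∑ k, (Q k - P k) ^ 2 / Dfun Q k with hs
  have hterm : ∀ i ∈ univ.erase j,
      gapQ Q j ^ 2 / (18 * Dbase Q j) * ((gapQ Q i + gapQ Q j) ^ 2)⁻¹ ≤
        ((P j - P i) ^ 2)⁻¹ * s := by
    intro i hi
    have hne := (mem_erase.1 hi).1
    have hk := key_term hzmin hQ hz hjz hlow hup hlt hmax hne
    have hPi : 0 < P j - P i := by linarith [hmax i hne]
    have hgi := gap_nonneg hm i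
    have hgs : 0 < gapQ Q i + gapQ Q j := by linarith
    rw [← hs] at hk
    rw [← div_eq_mul_inv, div_div, inv_mul_eq_div,
      div_le_div_iff₀ (by positivity) (by positivity)]
    linarith
  refine le_trans (le_of_eq ?_) (sum_le_sum hterm)
  rw [← mul_sum]
  have hD : Dbase Q j = (2 * gapQ Q j) ^ 2 *
    ∑ i ∈ univ.erase j, ((gapQ Q i + gapQ Q j) ^ 2)⁻¹ := rfl
  rw [div_mul_eq_mul_div, eq_div_iff (by positivity)]
  linarith

end aux

/-- Claim G.5. -/
theorem claim_G5 :
    ∃ c : ℝ, 0 < c ∧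
      ∀ (K : ℕ) (hK : 2 ≤ K) (Q : Fin K → ℝ),
        (∀ i j : Fin K, i ≤ j → Q j ≤ Q i) →
        (∀ i : Fin K, 0 < i.val → Q i < Q ⟨0, by omega⟩) →
        ∀ j : Fin K, 0 < j.val →
          c ≤ sInf {x : ℝ | ∃ P : Fin K → ℝ, uniqueMax P j ∧
              Q j ≤ P j ∧ P j ≤ 2 * Q ⟨0, by omega⟩ - Q j ∧
              (∀ i, i < j → Q i - (P j - Q j) ≤ P i ∧ P i ≤ Q i) ∧
              (∀ i, j < i → P i ≤ Q i) ∧ x = Sfun Q P} := by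
  refine ⟨1 / 72, by norm_num, fun K hK Q hQ hz j hj => le_csInf ?_ ?_⟩
  · -- The infimum of the empty set would be `0`: raising `Q j` to `2 Q_0 - Q j` is feasible.
    have hj0 := hz j hj
    have hle : ∀ i, Q i ≤ Q ⟨0, by omega⟩ := fun i => hQ _ _ (Fin.mk_le_of_le_val (Nat.zero_le _))
    have hne : ∀ i, i ≠ j →
        Function.update Q j (2 * Q ⟨0, by omega⟩ - Q j) i = Q i := fun i hi => by simp [hi]
    refine ⟨_, Function.update Q j (2 * Q ⟨0, by omega⟩ - Q j), ⟨fun k => ?_, fun k hk => ?_⟩,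
      ?_, ?_, fun i hi => ?_, fun i hi => ?_, rfl⟩
    · rcases eq_or_ne k j with rfl | hkj
      · exact le_rfl
      · rw [hne k hkj, Function.update_self]
        linarith [hle k]
    · by_contra hkj
      have := hk j
      rw [hne k hkj, Function.update_self] at this
      linarith [hle k]
    · rw [Function.update_self]; linarith
    · rw [Function.update_self]
    · rw [hne i hi.ne, Function.update_self]
      exact ⟨by linarith, le_rfl⟩
    · rw [hne i hi.ne']
  · rintro x ⟨P, hu, hlow, hup, hlt, -, rfl⟩
    refine S_lower (z := ⟨0, by omega⟩) (fun i => Fin.mk_le_of_le_val (Nat.zero_le _)) hQ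
      (fun i hi => hz i (Nat.pos_of_ne_zero fun h => hi (Fin.ext h))) hj hu hlow hup hlt
end

section
/- (Lemma G.6.) Let K ≥ 2 and let Q ∈ ℝ^K satisfy Q_1 > Q_2 ≥ … ≥ Q_K, and write Δ_i = Q_1 − Q_i. Then for all indices j, l with 2 ≤ j ≤ l ≤ K: D_j(Q)/D_l(Q) ≥ (1/4) · Δ_j²/Δ_l². -/
/-!
Write `S_i = Σ_{m ≠ i} (Δ_m + Δ_i)⁻²`, so that `D_i = 4 Δ_i² S_i` for a non-maximizer `i`; the claim
amounts to `S_l ≤ 4 S_j`. Adding the diagonal term `(2Δ_i)⁻²` gives sums over all of `Fin K` that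
decrease termwise in `Δ_i`, hence `S_l ≤ S_j + (2Δ_j)⁻²`. The term of the maximizer in `S_j` is
`Δ_j⁻²`, so the added diagonal term is at most `S_j / 4`, and in fact `S_l ≤ (5/4) S_j`.
-/


open Finset

/-- The comparison `S_l ≤ (5/4) S_j` for abstract nonnegative gaps `d`, where `z` is the maximizer. -/
lemma sum_erase_le {K : ℕ} (d : Fin K → ℝ) (hd : ∀ m, 0 ≤ d m) (z j l : Fin K)
    (hz : d z = 0) (hjpos : 0 < d j) (hjl : d j ≤ d l) :
    ∑ m ∈ univ.erase l, ((d m + d l) ^ 2)⁻¹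
      ≤ 5 / 4 * ∑ m ∈ univ.erase j, ((d m + d j) ^ 2)⁻¹ := by
  have hzj : z ≠ j := by
    rintro rfl
    exact hjpos.ne' hz
  have hone : (d j ^ 2)⁻¹ ≤ ∑ m ∈ univ.erase j, ((d m + d j) ^ 2)⁻¹ := by
    have h := Finset.single_le_sum (f := fun m => ((d m + d j) ^ 2)⁻¹)
      (fun m _ => by positivity) (Finset.mem_erase.mpr ⟨hzj, Finset.mem_univ z⟩)
    simpa [hz] using h
  have hfull : ∑ m ∈ univ.erase l, ((d m + d l) ^ 2)⁻¹ ≤ ∑ m, ((d m + d j) ^ 2)⁻¹ := by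
    refine (Finset.sum_le_sum_of_subset_of_nonneg (Finset.erase_subset l univ)
      fun m _ _ => by positivity).trans (Finset.sum_le_sum fun m _ => ?_)
    have := hd m
    gcongr
  have hsplit := Finset.sum_erase_add univ (fun m => ((d m + d j) ^ 2)⁻¹) (Finset.mem_univ j)
  have hdiag : ((d j + d j) ^ 2)⁻¹ = 1 / 4 * (d j ^ 2)⁻¹ := by
    field_simp
    ring
  simp only [hdiag] at hsplit
  linarith

/-- Lemma G.6. -/
theorem lemma_G6 (K : ℕ) (hK : 2 ≤ K) (Q : Fin K → ℝ)
    (hanti : ∀ i j : Fin K, i ≤ j → Q j ≤ Q i)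
    (hstrict : Q ⟨1, by omega⟩ < Q ⟨0, by omega⟩)
    (j l : Fin K) (hj : 0 < j.val) (hjl : j ≤ l) :
    (1 / 4) * ((Q ⟨0, by omega⟩ - Q j) ^ 2 / (Q ⟨0, by omega⟩ - Q l) ^ 2)
      ≤ Dfun Q j / Dfun Q l := by
  set z : Fin K := ⟨0, by omega⟩ with hzdef
  have hle : ∀ m, Q m ≤ Q z := fun m => hanti z m (Nat.zero_le _)
  have hmax : Qmax Q = Q z := by
    have : Nonempty (Fin K) := ⟨z⟩
    exact le_antisymm (ciSup_le hle) (le_ciSup (Set.finite_range Q).bddAbove z)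
  have hjlt : Q j < Q z := (hanti ⟨1, by omega⟩ j hj).trans_lt hstrict
  have hlj : Q l ≤ Q j := hanti j l hjl
  have hllt : Q l < Q z := hlj.trans_lt hjlt
  have hgap : ∀ m, gapQ Q m = Q z - Q m := fun m => by rw [gapQ, hmax]
  have hDj : Dfun Q j = Dbase Q j := if_neg fun h => absurd (h z) (not_le.mpr hjlt)
  have hDl : Dfun Q l = Dbase Q l := if_neg fun h => absurd (h z) (not_le.mpr hllt)
  have hz : gapQ Q z = 0 := by rw [hgap, sub_self]
  have hjpos : 0 < gapQ Q j := by rw [hgap]; linarith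
  have hlpos : 0 < gapQ Q l := by rw [hgap]; linarith
  have hnn : ∀ m, 0 ≤ gapQ Q m := fun m => by rw [hgap]; linarith [hle m]
  have key := sum_erase_le (gapQ Q) hnn z j l hz hjpos (by rw [hgap, hgap]; linarith)
  have hzl : z ≠ l := by
    intro h
    rw [← h] at hllt
    exact lt_irrefl _ hllt
  have hSl : 0 < ∑ m ∈ univ.erase l, ((gapQ Q m + gapQ Q l) ^ 2)⁻¹ :=
    Finset.sum_pos (fun m _ => by have := hnn m; positivity)
      ⟨z, Finset.mem_erase.mpr ⟨hzl, Finset.mem_univ z⟩⟩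
  rw [hDj, hDl, Dbase, Dbase, ← hgap, ← hgap]
  generalize ∑ m ∈ univ.erase l, ((gapQ Q m + gapQ Q l) ^ 2)⁻¹ = Sl at *
  generalize ∑ m ∈ univ.erase j, ((gapQ Q m + gapQ Q j) ^ 2)⁻¹ = Sj at *
  have hratio : 1 / 4 ≤ Sj / Sl := by
    rw [le_div_iff₀ hSl]
    linarith
  calc 1 / 4 * (gapQ Q j ^ 2 / gapQ Q l ^ 2)
      ≤ Sj / Sl * (gapQ Q j ^ 2 / gapQ Q l ^ 2) := by gcongr
    _ = (2 * gapQ Q j) ^ 2 * Sj / ((2 * gapQ Q l) ^ 2 * Sl) := by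
      field_simp
end

section
/- (Monotonicity and growth of the D-functional.) Let K ≥ 2 and let 0 = Δ_1 ≤ Δ_2 ≤ … ≤ Δ_K be nonnegative reals. For x > 0 and an index j define F_j(x) = (Δ_j + x)² · Σ_{z≠j} (Δ_z + x)^{−2}. Then: (i) for any indices s, j with Δ_s < Δ_j, one has F_s(x) < F_j(x); and (ii) for any indices j, u with 2 ≤ j < u and 0 < Δ_j < Δ_u, one has F_u(x) < 2 · (Δ_u²/Δ_j²) · F_j(x). -/
/-!
Write `a i = (Δ i + x)²` and `S = ∑ z, (a z)⁻¹`, so that `F_j(x) = a j * S - 1`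
(`mul_sum_erase_inv`). Strict monotonicity is then that of `a`. For the growth bound put
`r = Δ_u² / Δ_j²`. Since `(Δ_u + x) / (Δ_j + x) ≤ Δ_u / Δ_j`, one has `a u ≤ r * a j`, so
`F_u(x) ≤ r * (F_j(x) + 1) - 1`; and the summand at the index with gap `0` alone gives
`F_j(x) ≥ a j / x² > 1`, whence `r * (F_j(x) + 1) - 1 < 2 * r * F_j(x)`.
-/

open Finset

theorem mul_sum_erase_inv {ι : Type*} [Fintype ι] [DecidableEq ι] (a : ι → ℝ) (j : ι)
    (hj : a j ≠ 0) :
    a j * ∑ z ∈ univ.erase j, (a z)⁻¹ = a j * ∑ z, (a z)⁻¹ - 1 := by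
  rw [← add_sum_erase univ (fun z => (a z)⁻¹) (mem_univ j), mul_add, mul_inv_cancel₀ hj]
  ring

/-- Monotonicity and growth of the D-functional `F_j(x) = (Δ_j+x)² Σ_{z≠j} (Δ_z+x)⁻²`. -/
theorem D_functional_monotone_growth (K : ℕ) (hK : 2 ≤ K) (Δ : Fin K → ℝ)
    (h0 : Δ ⟨0, by omega⟩ = 0) (hnn : ∀ i, 0 ≤ Δ i) (hmono : Monotone Δ) :
    ∀ x : ℝ, 0 < x →
      (∀ s j : Fin K, Δ s < Δ j →
          (Δ s + x) ^ 2 * ∑ z ∈ univ.erase s, ((Δ z + x) ^ 2)⁻¹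
            < (Δ j + x) ^ 2 * ∑ z ∈ univ.erase j, ((Δ z + x) ^ 2)⁻¹) ∧
      (∀ j u : Fin K, 0 < j.val → j < u → 0 < Δ j → Δ j < Δ u →
          (Δ u + x) ^ 2 * ∑ z ∈ univ.erase u, ((Δ z + x) ^ 2)⁻¹
            < 2 * ((Δ u) ^ 2 / (Δ j) ^ 2) *
                ((Δ j + x) ^ 2 * ∑ z ∈ univ.erase j, ((Δ z + x) ^ 2)⁻¹)) := by
  intro x hx
  have hpos : ∀ i, 0 < Δ i + x := fun i => add_pos_of_nonneg_of_pos (hnn i) hx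
  have hF : ∀ j, (Δ j + x) ^ 2 * ∑ z ∈ univ.erase j, ((Δ z + x) ^ 2)⁻¹
      = (Δ j + x) ^ 2 * ∑ z, ((Δ z + x) ^ 2)⁻¹ - 1 := fun j =>
    mul_sum_erase_inv (fun i => (Δ i + x) ^ 2) j (pow_pos (hpos j) 2).ne'
  have hS : 0 < ∑ z, ((Δ z + x) ^ 2)⁻¹ :=
    sum_pos (fun i _ => inv_pos.2 (pow_pos (hpos i) 2)) ⟨⟨0, by omega⟩, mem_univ _⟩
  refine ⟨fun s j hsj => ?_, fun j u hj0 _ hj hju => ?_⟩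
  · rw [hF, hF]
    have ha : (Δ s + x) ^ 2 < (Δ j + x) ^ 2 :=
      pow_lt_pow_left₀ (by linarith) (hpos s).le two_ne_zero
    linarith [mul_lt_mul_of_pos_right ha hS]
  · have hF1 : 1 < (Δ j + x) ^ 2 * ∑ z ∈ univ.erase j, ((Δ z + x) ^ 2)⁻¹ := by
      have hmem : (⟨0, by omega⟩ : Fin K) ∈ univ.erase j :=
        mem_erase.2 ⟨fun h => by simp [← h] at hj0, mem_univ _⟩
      have hT := single_le_sum (f := fun z => ((Δ z + x) ^ 2)⁻¹)
        (fun i _ => (inv_pos.2 (pow_pos (hpos i) 2)).le) hmem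
      simp only [h0, zero_add] at hT
      have hx2 : x ^ 2 < (Δ j + x) ^ 2 :=
        pow_lt_pow_left₀ (by linarith) hx.le two_ne_zero
      calc (1 : ℝ) = x ^ 2 * (x ^ 2)⁻¹ := (mul_inv_cancel₀ (pow_pos hx 2).ne').symm
        _ < (Δ j + x) ^ 2 * (x ^ 2)⁻¹ := by gcongr
        _ ≤ _ := by gcongr
    have hr : 0 < (Δ u) ^ 2 / (Δ j) ^ 2 := by
      have := hj.trans hju
      positivity
    have ha : (Δ u + x) ^ 2 ≤ (Δ u) ^ 2 / (Δ j) ^ 2 * (Δ j + x) ^ 2 := by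
      rw [← div_pow, ← mul_pow]
      refine pow_le_pow_left₀ (hpos u).le ?_ 2
      rw [div_mul_eq_mul_div, le_div_iff₀ hj]
      linarith [mul_le_mul_of_nonneg_right hju.le hx.le]
    have haS := mul_le_mul_of_nonneg_right ha hS.le
    rw [mul_assoc] at haS
    rw [hF] at hF1
    rw [hF, hF]
    linarith [mul_lt_mul_of_pos_left hF1 hr]
end

section
/- (Existence and uniqueness of the modified mean.) Let K ≥ 2 and P ∈ ℝ^K with P_1 > P_2 ≥ … ≥ P_K, and fix j ∈ {2,…,K}. For μ ∈ ℝ define the index set I_j(μ) = {1} ∪ {i ∈ {2,…,j} : P_i ≤ μ}. Then there exists a unique real number μ̃_j satisfying μ̃_j = (1/|I_j(μ̃_j)|) · Σ_{i ∈ I_j(μ̃_j)} P_i, and moreover μ̃_j ∈ [P_j, P_1]. -/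
/-! The fixed-point equation `μ = (∑ i ∈ I(μ), P i) / |I(μ)|` says that the deviations
`P i - μ` over `I(μ)` sum to zero. An arm `i ≥ 1` contributes `P i - μ` exactly when this is
nonpositive, so the sum of deviations is `(P 0 - μ) - ∑ i, max (μ - P i) 0`, the inner sum being
over `0 < i ≤ j`. This function of `μ` is continuous and strictly decreasing, is positive at `P j`
(all the maxima vanish there) and nonpositive at `P 0`, so it has exactly one zero, which lies
in `[P j, P 0]`. -/

open Finset

/-- The averaging equation over the `μ`-dependent index set is the vanishing of a continuous
function of `μ`, in which the threshold condition has become a positive part. -/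
lemma mean_eq_iff_excess_eq_zero {ι : Type*} [DecidableEq ι] (P : ι → ℝ) (a : ι) (T : Finset ι)
    (ha : a ∉ T) (μ : ℝ) :
    μ = (∑ i ∈ insert a (T.filter fun i => P i ≤ μ), P i) /
        ((insert a (T.filter fun i => P i ≤ μ)).card : ℝ) ↔
      (P a - μ) - ∑ i ∈ T, max (μ - P i) 0 = 0 := by
  have hpos : (0 : ℝ) < ((insert a (T.filter fun i => P i ≤ μ)).card : ℝ) := by
    exact_mod_cast Finset.card_pos.mpr (Finset.insert_nonempty _ _)
  have ha' : a ∉ T.filter fun i => P i ≤ μ := fun h => ha (Finset.mem_filter.mp h).1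
  have hsum : ∑ i ∈ T, max (μ - P i) 0 = ∑ i ∈ T.filter (fun i => P i ≤ μ), (μ - P i) := by
    rw [Finset.sum_filter]
    refine Finset.sum_congr rfl fun i _ => ?_
    split_ifs with h
    · exact max_eq_left (by linarith)
    · exact max_eq_right (by linarith)
  rw [eq_div_iff hpos.ne', hsum, Finset.sum_insert ha', Finset.card_insert_of_notMem ha',
    Finset.sum_sub_distrib, Finset.sum_const, nsmul_eq_mul]
  push_cast
  constructor <;> intro h <;> linarith

lemma excess_strictAnti {ι : Type*} (P : ι → ℝ) (a : ι) (T : Finset ι) :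
    StrictAnti fun μ : ℝ => (P a - μ) - ∑ i ∈ T, max (μ - P i) 0 := by
  intro x y hxy
  have h : ∑ i ∈ T, max (x - P i) 0 ≤ ∑ i ∈ T, max (y - P i) 0 :=
    Finset.sum_le_sum fun i _ => max_le_max (by linarith) le_rfl
  dsimp only
  linarith

/-- Existence and uniqueness of the modified mean of the top-j arms.
Indices are 0-based: Lean index `0` is the paper's arm `1`, and the index set
`I_j(μ) = {1} ∪ {i ∈ {2,…,j} : P_i ≤ μ}` becomes
`insert 0 {i : 0 < i ≤ j, P i ≤ μ}`. -/
theorem modified_mean_exists_unique (K : ℕ) (hK : 2 ≤ K) (P : Fin K → ℝ)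
    (hanti : ∀ i j : Fin K, i ≤ j → P j ≤ P i)
    (hstrict : ∀ i : Fin K, 0 < i.val → P i < P ⟨0, by omega⟩)
    (j : Fin K) (hj : 0 < j.val) :
    ∃ μ : ℝ,
      (μ = (∑ i ∈ insert (⟨0, by omega⟩ : Fin K)
              (univ.filter fun i : Fin K => 0 < i.val ∧ i.val ≤ j.val ∧ P i ≤ μ), P i) /
            ((insert (⟨0, by omega⟩ : Fin K)
              (univ.filter fun i : Fin K => 0 < i.val ∧ i.val ≤ j.val ∧ P i ≤ μ)).card : ℝ) ∧
        P j ≤ μ ∧ μ ≤ P ⟨0, by omega⟩) ∧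
      ∀ μ' : ℝ,
        μ' = (∑ i ∈ insert (⟨0, by omega⟩ : Fin K)
              (univ.filter fun i : Fin K => 0 < i.val ∧ i.val ≤ j.val ∧ P i ≤ μ'), P i) /
            ((insert (⟨0, by omega⟩ : Fin K)
              (univ.filter fun i : Fin K => 0 < i.val ∧ i.val ≤ j.val ∧ P i ≤ μ')).card : ℝ) →
        μ' = μ := by
  have key := mean_eq_iff_excess_eq_zero P ⟨0, by omega⟩
    (univ.filter fun i : Fin K => 0 < i.val ∧ i.val ≤ j.val) (by simp)
  simp only [Finset.filter_filter, and_assoc] at key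
  simp only [key]
  set T := univ.filter fun i : Fin K => 0 < i.val ∧ i.val ≤ j.val
  have hanti' := excess_strictAnti P ⟨0, by omega⟩ T
  have hcont : Continuous fun μ : ℝ => (P ⟨0, by omega⟩ - μ) - ∑ i ∈ T, max (μ - P i) 0 := by
    fun_prop
  have hj0 : ∑ i ∈ T, max (P j - P i) 0 = 0 :=
    Finset.sum_eq_zero fun i hi => max_eq_right <| sub_nonpos.mpr <|
      hanti i j (Finset.mem_filter.mp hi).2.2
  have h0 : 0 ≤ ∑ i ∈ T, max (P ⟨0, by omega⟩ - P i) 0 :=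
    Finset.sum_nonneg fun i _ => le_max_right _ _
  have hlt := hstrict j hj
  obtain ⟨μ, ⟨h1, h2⟩, hμ⟩ := intermediate_value_Icc' hlt.le hcont.continuousOn
    (show (0 : ℝ) ∈ Set.Icc _ _ from
      ⟨by linarith, by linarith⟩)
  exact ⟨μ, ⟨hμ, h1, h2⟩, fun μ' h' => hanti'.injective (h'.trans hμ.symm)⟩
end

section
/- (Theorem I.2, relation between H₂ and H₃.) Let K ≥ 2 and P ∈ ℝ^K with P_1 > P_2 ≥ … ≥ P_K; write Δ_j = P_1 − P_j. For j ∈ {2,…,K} let μ̃_j ∈ [P_j, P_1] be the modified mean of the top-j arms, and set Δ_1^{(j)} = P_1 − μ̃_j and Δ_i^{(j)} = max(μ̃_j − P_i, 0) for i ∈ {2,…,j}. Define H₃(P) = max_{j ∈ {2,…,K}} 2j / ( Σ_{i=1}^{j} (Δ_i^{(j)})² ) and H₂(P) = 4 · max_{j ∈ {2,…,K}} j / Δ_j². Then 1/2 < H₃(P)/H₂(P) ≤ 1. -/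
open Finset

/-!
Fix `j` and write `a = P 0`, `b = P j`, `m = μt j`, `d i = max (m - P i) 0` for `0 < i ≤ j`. The
fixed-point equation for `m` says precisely that `a - m = ∑ d i`. Let `D = (a - m)² + ∑ (d i)²` be
the denominator in `H₃`.

* Keeping only the terms of `0` and `j`, `D ≥ (a - m)² + (m - b)² ≥ (a - b)² / 2`.
* Since `d i ≤ m - b`, `D ≤ (a - m)² + (m - b) ∑ d i = (a - m) (a - b)`, and this is less than
  `(a - b)²` because `m = b` would force all `d i = 0`, hence `a = m = b`.

So the `j`-th term of `H₃` lies between half (strictly) and all of the `j`-th term of `H₂`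
(`modified_gap_bounds`). Both suprema are maxima of finitely many terms, so the bounds pass to
`H₃ / H₂`.
-/

/-- The two-sided bound on the sum of squared modified gaps. The fixed-point equation enters as
`hfix`, in the form "the gap of the best arm equals the sum of the other modified gaps". -/
lemma modified_gap_bounds {ι : Type*} (s : Finset ι) (p : ι → ℝ) (a m : ℝ) (j : ι) (hj : j ∈ s)
    (hmin : ∀ i ∈ s, p j ≤ p i) (hlt : p j < a) (hm : p j ≤ m)
    (hfix : a - m = ∑ i ∈ s, max (m - p i) 0) :
    (a - p j) ^ 2 / 2 ≤ (a - m) ^ 2 + ∑ i ∈ s, max (m - p i) 0 ^ 2 ∧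
      (a - m) ^ 2 + ∑ i ∈ s, max (m - p i) 0 ^ 2 < (a - p j) ^ 2 := by
  have hd0 : ∀ i, 0 ≤ max (m - p i) 0 := fun i => le_max_right _ _
  have hd1 : ∀ i ∈ s, max (m - p i) 0 ≤ m - p j := fun i hi =>
    max_le (by linarith [hmin i hi]) (by linarith)
  have hdj : max (m - p j) 0 = m - p j := max_eq_left (by linarith)
  have hlow : (m - p j) ^ 2 ≤ ∑ i ∈ s, max (m - p i) 0 ^ 2 := by
    have h := single_le_sum (f := fun i => max (m - p i) 0 ^ 2) (fun i _ => sq_nonneg _) hj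
    simpa only [hdj] using h
  have hup : ∑ i ∈ s, max (m - p i) 0 ^ 2 ≤ (m - p j) * (a - m) := by
    rw [hfix, mul_sum]
    refine sum_le_sum fun i hi => ?_
    rw [sq]
    exact mul_le_mul_of_nonneg_right (hd1 i hi) (hd0 i)
  have hmlt : p j < m := by
    refine lt_of_le_of_ne hm fun h => ?_
    have hz : ∑ i ∈ s, max (m - p i) 0 = 0 :=
      sum_eq_zero fun i hi => le_antisymm (by linarith [hd1 i hi]) (hd0 i)
    linarith
  constructor
  · nlinarith [sq_nonneg ((a - m) - (m - p j))]
  · nlinarith [mul_pos (sub_pos.2 hlt) (sub_pos.2 hmlt)]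

/-- Clearing the denominator of a mean: if `m` is the mean of `p` over `insert o t`, the deviation
`p o - m` is balanced by the deviations over `t`. -/
lemma mean_insert_balance {ι : Type*} [DecidableEq ι] (t : Finset ι) (o : ι) (ho : o ∉ t)
    (p : ι → ℝ) (m : ℝ) (h : m = (∑ i ∈ insert o t, p i) / ((insert o t).card : ℝ)) :
    p o - m = ∑ i ∈ t, (m - p i) := by
  rw [sum_insert ho, card_insert_of_notMem ho, eq_div_iff (by positivity)] at h
  rw [sum_sub_distrib, sum_const, nsmul_eq_mul]
  push_cast at h
  linarith

/-- Finite real families indexed by `q` attain their supremum and are bounded by it. -/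
lemma sSup_finite_family {ι : Type*} [Finite ι] (q : ι → Prop) (hq : ∃ j, q j) (f : ι → ℝ) :
    (∃ j, q j ∧ sSup {x : ℝ | ∃ j, q j ∧ x = f j} = f j) ∧
      ∀ j, q j → f j ≤ sSup {x : ℝ | ∃ j, q j ∧ x = f j} := by
  have hfin : {x : ℝ | ∃ j, q j ∧ x = f j}.Finite :=
    (Set.finite_range f).subset (by rintro x ⟨j, -, rfl⟩; exact ⟨j, rfl⟩)
  obtain ⟨j₀, hj₀⟩ := hq
  have hne : {x : ℝ | ∃ j, q j ∧ x = f j}.Nonempty := ⟨f j₀, j₀, hj₀, rfl⟩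
  exact ⟨hne.csSup_mem hfin, fun j hj => le_csSup hfin.bddAbove ⟨j, hj, rfl⟩⟩

/-- Theorem I.2 (relation between H₂ and H₃).
Indices are 0-based: Lean index `i` is the paper's arm `i+1`, so the paper's
range `j ∈ {2,…,K}` becomes `0 < j.val`, and the paper's value `j` becomes `j.val + 1`. -/
theorem H2_H3_relation (K : ℕ) (hK : 2 ≤ K) (P : Fin K → ℝ)
    (hanti : ∀ i j : Fin K, i ≤ j → P j ≤ P i)
    (hstrict : ∀ i : Fin K, 0 < i.val → P i < P ⟨0, by omega⟩)
    -- μt j is the modified mean of the top-(j+1) arms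
    (μt : Fin K → ℝ)
    (hμmem : ∀ j : Fin K, 0 < j.val → P j ≤ μt j ∧ μt j ≤ P ⟨0, by omega⟩)
    (hμfix : ∀ j : Fin K, 0 < j.val →
        μt j = (∑ i ∈ insert (⟨0, by omega⟩ : Fin K)
                (univ.filter fun i : Fin K => 0 < i.val ∧ i.val ≤ j.val ∧ P i ≤ μt j), P i) /
              ((insert (⟨0, by omega⟩ : Fin K)
                (univ.filter fun i : Fin K => 0 < i.val ∧ i.val ≤ j.val ∧ P i ≤ μt j)).card : ℝ))
    -- the modified gaps Δ_i^{(j)}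
    (Δmod : Fin K → Fin K → ℝ)
    (hΔ0 : ∀ j : Fin K, 0 < j.val → Δmod j ⟨0, by omega⟩ = P ⟨0, by omega⟩ - μt j)
    (hΔi : ∀ j i : Fin K, 0 < j.val → 0 < i.val → i.val ≤ j.val →
        Δmod j i = max (μt j - P i) 0)
    (H2 H3 : ℝ)
    (hH3 : H3 = sSup {x : ℝ | ∃ j : Fin K, 0 < j.val ∧
        x = 2 * ((j.val : ℝ) + 1) /
              ∑ i ∈ univ.filter (fun i : Fin K => i.val ≤ j.val), (Δmod j i) ^ 2})
    (hH2 : H2 = 4 * sSup {x : ℝ | ∃ j : Fin K, 0 < j.val ∧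
        x = ((j.val : ℝ) + 1) / (P ⟨0, by omega⟩ - P j) ^ 2}) :
    1 / 2 < H3 / H2 ∧ H3 / H2 ≤ 1 := by
  have key : ∀ j : Fin K, 0 < j.val →
      (P ⟨0, by omega⟩ - P j) ^ 2 / 2 ≤
          ∑ i ∈ univ.filter (fun i : Fin K => i.val ≤ j.val), (Δmod j i) ^ 2 ∧
        ∑ i ∈ univ.filter (fun i : Fin K => i.val ≤ j.val), (Δmod j i) ^ 2 <
          (P ⟨0, by omega⟩ - P j) ^ 2 := by
    intro j hj
    set s : Finset (Fin K) := univ.filter fun i : Fin K => 0 < i.val ∧ i.val ≤ j.val with hs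
    have hsplit : univ.filter (fun i : Fin K => i.val ≤ j.val) = insert ⟨0, by omega⟩ s := by
      ext i
      simp only [hs, mem_filter, mem_univ, true_and, mem_insert, Fin.ext_iff]
      omega
    have hsum : ∑ i ∈ univ.filter (fun i : Fin K => i.val ≤ j.val), (Δmod j i) ^ 2 =
        (P ⟨0, by omega⟩ - μt j) ^ 2 + ∑ i ∈ s, max (μt j - P i) 0 ^ 2 := by
      rw [hsplit, sum_insert (by simp [hs]), hΔ0 j hj]
      congr 1
      refine sum_congr rfl fun i hi => ?_
      simp only [hs, mem_filter, mem_univ, true_and] at hi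
      rw [hΔi j i hj hi.1 hi.2]
    have hbal : P ⟨0, by omega⟩ - μt j = ∑ i ∈ s, max (μt j - P i) 0 := by
      rw [mean_insert_balance _ _ (by simp) P (μt j) (hμfix j hj)]
      have ht : (univ.filter fun i : Fin K => 0 < i.val ∧ i.val ≤ j.val ∧ P i ≤ μt j) =
          s.filter fun i => P i ≤ μt j := by
        ext i
        simp [hs, and_assoc]
      rw [ht, sum_filter]
      refine sum_congr rfl fun i _ => ?_
      split_ifs with h
      · exact (max_eq_left (by linarith)).symm
      · exact (max_eq_right (by linarith)).symm
    rw [hsum]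
    exact modified_gap_bounds s P _ _ j (by simp [hs, hj])
      (fun i hi => hanti i j (by simp [hs] at hi; exact hi.2)) (hstrict j hj) (hμmem j hj).1 hbal
  have hex : ∃ j : Fin K, 0 < j.val := ⟨⟨1, by omega⟩, Nat.one_pos⟩
  obtain ⟨⟨j3, hj3, e3⟩, hle3⟩ := sSup_finite_family (fun j : Fin K => 0 < j.val) hex
    (fun j => 2 * ((j.val : ℝ) + 1) /
      ∑ i ∈ univ.filter (fun i : Fin K => i.val ≤ j.val), (Δmod j i) ^ 2)
  obtain ⟨⟨j2, hj2, e2⟩, hle2⟩ := sSup_finite_family (fun j : Fin K => 0 < j.val) hex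
    (fun j => ((j.val : ℝ) + 1) / (P ⟨0, by omega⟩ - P j) ^ 2)
  rw [← hH3] at e3 hle3
  have hgap : ∀ j : Fin K, 0 < j.val → 0 < (P ⟨0, by omega⟩ - P j) ^ 2 := fun j hj =>
    pow_pos (sub_pos.2 (hstrict j hj)) 2
  have hH2pos : 0 < H2 := by
    rw [hH2, e2]
    have := hgap j2 hj2
    positivity
  rw [lt_div_iff₀ hH2pos, div_le_one hH2pos]
  constructor
  · -- compare the two terms at an index where `H₂` is attained
    refine lt_of_lt_of_le ?_ (hle3 j2 hj2)
    obtain ⟨hlow, hup⟩ := key j2 hj2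
    have hg := hgap j2 hj2
    calc 1 / 2 * H2 = 2 * ((j2.val : ℝ) + 1) / (P ⟨0, by omega⟩ - P j2) ^ 2 := by
          rw [hH2, e2]; ring
      _ < _ := div_lt_div_of_pos_left (by positivity) (by linarith) hup
  · -- compare the two terms at an index where `H₃` is attained
    obtain ⟨hlow, hup⟩ := key j3 hj3
    have hg := hgap j3 hj3
    calc H3 ≤ 2 * ((j3.val : ℝ) + 1) / ((P ⟨0, by omega⟩ - P j3) ^ 2 / 2) := by
          rw [e3]
          exact div_le_div_of_nonneg_left (by positivity) (by linarith) hlow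
      _ = 4 * (((j3.val : ℝ) + 1) / (P ⟨0, by omega⟩ - P j3) ^ 2) := by
          field_simp; norm_num
      _ ≤ H2 := by
          rw [hH2]
          exact mul_le_mul_of_nonneg_left (hle2 j3 hj3) (by norm_num)
end

section
/- (Constrained quadratic maximization used in the proof of Theorem I.2.) Let j ≥ 2 be an integer and Δ > 0 a real number. Let a_1, a_2, …, a_j be nonnegative reals satisfying Σ_{i=2}^{j} a_i = a_1 and a_1 + a_i ≤ Δ for every i ∈ {2,…,j}. Then Σ_{i=1}^{j} a_i² ≤ (1 − 1/j) · Δ², and in particular Σ_{i=1}^{j} a_i² < Δ². -/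
/-!
Write `S = a 1`. Multiplying `a i ≤ Δ - S` by `a i ≥ 0` and summing over `2 ≤ i ≤ j` gives
`∑ (a i)² ≤ S (Δ - S)`, so the full sum of squares is at most `S² + S (Δ - S) = S Δ`.
Summing the constraints `S + a i ≤ Δ` themselves gives `j S ≤ (j - 1) Δ`, that is
`S ≤ (1 - 1 / j) Δ`, and the two bounds combine.
-/

/-- Constrained quadratic maximization used in the proof of Theorem I.2. -/
theorem constrained_quadratic_max (j : ℕ) (hj : 2 ≤ j) (Δ : ℝ) (hΔ : 0 < Δ)
    (a : ℕ → ℝ) (ha : ∀ i ∈ Finset.Icc 1 j, 0 ≤ a i)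
    (hsum : ∑ i ∈ Finset.Icc 2 j, a i = a 1)
    (hbound : ∀ i ∈ Finset.Icc 2 j, a 1 + a i ≤ Δ) :
    ∑ i ∈ Finset.Icc 1 j, (a i) ^ 2 ≤ (1 - 1 / (j : ℝ)) * Δ ^ 2 ∧
    ∑ i ∈ Finset.Icc 1 j, (a i) ^ 2 < Δ ^ 2 := by
  have hj0 : (0 : ℝ) < j := by exact_mod_cast (by omega : 0 < j)
  have hsplit : ∑ i ∈ Finset.Icc 1 j, (a i) ^ 2
      = a 1 ^ 2 + ∑ i ∈ Finset.Icc 2 j, (a i) ^ 2 :=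
    (Finset.add_sum_Ioc_eq_sum_Icc (f := fun i => (a i) ^ 2) (by omega : 1 ≤ j)).symm
  have hsq : ∑ i ∈ Finset.Icc 2 j, (a i) ^ 2 ≤ a 1 * (Δ - a 1) := by
    rw [← hsum, Finset.sum_mul, hsum]
    refine Finset.sum_le_sum fun i hi => ?_
    have hi0 : 0 ≤ a i := ha i (Finset.Icc_subset_Icc_left (by norm_num) hi)
    nlinarith [hbound i hi]
  have hS : (j : ℝ) * a 1 ≤ (j - 1) * Δ := by
    have h := Finset.sum_le_sum hbound
    rw [Finset.sum_add_distrib, hsum, Finset.sum_const, Finset.sum_const, Nat.card_Icc,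
      nsmul_eq_mul, nsmul_eq_mul, show j + 1 - 2 = j - 1 by omega,
      Nat.cast_sub (by omega : 1 ≤ j), Nat.cast_one] at h
    linarith
  have hS' : a 1 ≤ (1 - 1 / (j : ℝ)) * Δ := by
    rw [one_sub_div hj0.ne', div_mul_eq_mul_div, le_div_iff₀ hj0]
    linarith
  have hmain : ∑ i ∈ Finset.Icc 1 j, (a i) ^ 2 ≤ (1 - 1 / (j : ℝ)) * Δ ^ 2 := by
    rw [hsplit]
    nlinarith [mul_le_mul_of_nonneg_right hS' hΔ.le]
  refine ⟨hmain, hmain.trans_lt ?_⟩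
  have : 0 < 1 / (j : ℝ) * Δ ^ 2 := by positivity
  linarith
end
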